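/- (Szawlowski) Let f be a germ of holomorphic function at 0 ∈ ℂⁿ, n ≥ 2, that is right equivalent to the product of all coordinates, i.e., there exists a germ of biholomorphism σ : (ℂⁿ,0) → (ℂⁿ,0) with f ∘ σ⁻¹(z) = z₁ ⋯ zₙ. Then there exist a germ of volume-preserving biholomorphism Φ : (ℂⁿ,0) → (ℂⁿ,0) and a germ of automorphism Ψ : (ℂ,0) → (ℂ,0) such that f ∘ Φ(z) = Ψ(z₁ ⋯ zₙ); moreover Ψ is uniquely determined by f up to a sign. -/

import Mathlib

/-!
Write `P z = ∏ i, z i` and fix a coordinate `o`. The fields `D_k = z_k ∂/∂z_k - z_o ∂/∂z_o`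
generate the torus action that preserves `P`; averaging over its circles turns every question into
one about functions of `P` alone.

Existence. Let `J` be the Jacobian determinant of `σ⁻¹`. It suffices to find a germ `η` with
Jacobian determinant `J` and `P ∘ η = ψ ∘ P`: then `Φ = σ⁻¹ ∘ η⁻¹` preserves volume and `Ψ = ψ⁻¹`
works. If `A` is the average of `J` over the circle generated by `D_k`, then `J = A (1 + D_k u)` for
some analytic `u`, and this is the Jacobian determinant, relative to the density `A`, of the map
multiplying `z_k` by `exp u` and `z_o` by `exp (-u)`, which preserves `P`. Treating all `k` in turn
reduces to a `J` invariant under every `D_k`. Such a `J` equals `j ∘ P`, and if `ψ` is the primitive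
of `j`, written `ψ t = t exp (l t)`, then multiplying the single coordinate `z_o` by `exp (l (P z))`
gives `η`.

Uniqueness. Two normal forms differ by a volume-preserving `χ` with `P ∘ χ = ψ ∘ P`. The germ `χ`
maps the coordinate hyperplanes to each other, so up to a permutation `τ` it multiplies the
coordinates by units `exp (v_j z)`. Composing such a map with maps as above moves all the exponents
to the coordinate `o`, and changes the Jacobian determinant only by sums of functions `D_k K_k`. A
map multiplying only `z_o` has Jacobian determinant `ψ' ∘ P`. Hence `sign τ - ψ' ∘ P` is such a
sum, and averaging over the circles shows that it is zero. So `ψ t = ± t`.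
-/

open Filter Topology

/-- Wirtinger derivative ∂/∂z_j of a (complex-valued) function at `p`:
`(1/2)(∂F/∂x_j − i ∂F/∂y_j)`. -/
noncomputable def wirtZ {n : ℕ} (F : (Fin n → ℂ) → ℂ) (j : Fin n) (p : Fin n → ℂ) : ℂ :=
  (fderiv ℝ F p (Pi.single j 1) - Complex.I * fderiv ℝ F p (Pi.single j Complex.I)) / 2

/-- Wirtinger derivative ∂/∂z̄_j of a (complex-valued) function at `p`:
`(1/2)(∂F/∂x_j + i ∂F/∂y_j)`. -/
noncomputable def wirtZbar {n : ℕ} (F : (Fin n → ℂ) → ℂ) (j : Fin n) (p : Fin n → ℂ) : ℂ :=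
  (fderiv ℝ F p (Pi.single j 1) + Complex.I * fderiv ℝ F p (Pi.single j Complex.I)) / 2

/-- The germ `M = {F = 0}` at `0` is Levi-flat: for every point `p` of `M* = M \ Sing(M)`
near `0` and every `v` with `Σ_j F_{z_j}(p) v_j = 0` one has
`Σ_{i,j} F_{z_i z̄_j}(p) v_i conj(v_j) = 0`. -/
def LeviFlatGerm {n : ℕ} (F : (Fin n → ℂ) → ℝ) : Prop :=
  ∀ᶠ p in 𝓝 (0 : Fin n → ℂ), F p = 0 → fderiv ℝ F p ≠ 0 →
    ∀ v : Fin n → ℂ,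
      (∑ j, wirtZ (fun z => ((F z : ℝ) : ℂ)) j p * v j) = 0 →
      (∑ i, ∑ j, wirtZbar (wirtZ (fun z => ((F z : ℝ) : ℂ)) i) j p * v i * (starRingEnd ℂ) (v j)) = 0

/-- `F` is irreducible in the ring of germs at `0` of real-valued real-analytic functions:
in any factorization `F = g·h` one of the factors is a unit (i.e. does not vanish at `0`). -/
def IrreducibleRGerm {n : ℕ} (F : (Fin n → ℂ) → ℝ) : Prop :=
  ∀ g h : (Fin n → ℂ) → ℝ, AnalyticAt ℝ g 0 → AnalyticAt ℝ h 0 →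
    (∀ᶠ z in 𝓝 (0 : Fin n → ℂ), F z = g z * h z) → g 0 ≠ 0 ∨ h 0 ≠ 0

/-- `φ` is a germ of biholomorphism `(ℂⁿ,0) → (ℂⁿ,0)` with local inverse `ι`. -/
def IsGermBiholo {n : ℕ} (φ ι : (Fin n → ℂ) → (Fin n → ℂ)) : Prop :=
  AnalyticAt ℂ φ 0 ∧ AnalyticAt ℂ ι 0 ∧ φ 0 = 0 ∧ ι 0 = 0 ∧
  (∀ᶠ z in 𝓝 (0 : Fin n → ℂ), ι (φ z) = z) ∧ (∀ᶠ z in 𝓝 (0 : Fin n → ℂ), φ (ι z) = z)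

/-- `φ` is volume-preserving (isochore): the determinant of its complex Jacobian is
identically `1` near `0`. -/
def IsVolumePreserving {n : ℕ} (φ : (Fin n → ℂ) → (Fin n → ℂ)) : Prop :=
  ∀ᶠ z in 𝓝 (0 : Fin n → ℂ), LinearMap.det ((fderiv ℂ φ z).toLinearMap) = 1

/-- `ψ` is a germ of automorphism of `(ℂ,0)`. -/
def IsGermAuto (ψ : ℂ → ℂ) : Prop :=
  AnalyticAt ℂ ψ 0 ∧ ψ 0 = 0 ∧ deriv ψ 0 ≠ 0

section OrbitIntegral

variable {E F : Type*} [NormedAddCommGroup E] [NormedSpace ℂ E]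
  [NormedAddCommGroup F] [NormedSpace ℂ F]

theorem eventually_forall_contraction {p : E → Prop} (hp : ∀ᶠ z in 𝓝 0, p z) :
    ∀ᶠ z in 𝓝 0, ∀ L : E →L[ℂ] E, ‖L‖ ≤ 1 → p (L z) := by
  obtain ⟨r, hr, hball⟩ := Metric.eventually_nhds_iff_ball.1 hp
  filter_upwards [Metric.ball_mem_nhds 0 hr] with z hz L hL
  refine hball _ ?_
  rw [mem_ball_zero_iff] at hz ⊢
  exact (L.le_of_opNorm_le hL z).trans_lt (by rwa [one_mul])

/-- The integral `∫ w(θ) J(L(θ) z) dθ` over `[a, b]` of a function along a curve of linear maps.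
Averages over circle actions and Hadamard's quotient formula are of this form. -/
noncomputable def orbitIntegral (a b : ℝ) (w : ℝ → ℂ) (L : ℝ → E →L[ℂ] E) (J : E → F) (z : E) : F :=
  ∫ θ in a..b, w θ • J (L θ z)

/-- The formal power series of `orbitIntegral a b w L J` when `p` is that of `J` at `0`. -/
noncomputable def orbitSeries (a b : ℝ) (w : ℝ → ℂ) (L : ℝ → E →L[ℂ] E)
    (p : FormalMultilinearSeries ℂ E F) : FormalMultilinearSeries ℂ E F :=
  fun m => ∫ θ in a..b, w θ • (p m).compContinuousLinearMap fun _ => L θ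

variable {a b : ℝ} {w : ℝ → ℂ} {L : ℝ → E →L[ℂ] E}

theorem norm_compContinuousLinearMap_le_of_norm_le_one {A : E →L[ℂ] E} (hA : ‖A‖ ≤ 1) {m : ℕ}
    (p : E [×m]→L[ℂ] F) : ‖p.compContinuousLinearMap fun _ => A‖ ≤ ‖p‖ :=
  (p.norm_compContinuousLinearMap_le _).trans <| mul_le_of_le_one_right (norm_nonneg _) <|
    Finset.prod_le_one (fun _ _ => norm_nonneg _) fun _ _ => hA

theorem continuous_orbitSeries_integrand (hw : Continuous w) (hL : Continuous L) {m : ℕ}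
    (p : E [×m]→L[ℂ] F) :
    Continuous fun θ => w θ • p.compContinuousLinearMap fun _ => L θ := by
  have hcomp := (ContinuousMultilinearMap.compContinuousLinearMapContinuousMultilinear ℂ
    (fun _ : Fin m => E) (fun _ : Fin m => E) F).cont
  exact hw.smul ((hcomp.comp (continuous_pi fun _ => hL)).clm_apply continuous_const)

theorem norm_orbitSeries_le {W : ℝ} (hW : ∀ θ ∈ Set.uIcc a b, ‖w θ‖ ≤ W)
    (hL1 : ∀ θ ∈ Set.uIcc a b, ‖L θ‖ ≤ 1) (p : FormalMultilinearSeries ℂ E F) (m : ℕ) :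
    ‖orbitSeries a b w L p m‖ ≤ W * ‖p m‖ * |b - a| := by
  refine intervalIntegral.norm_integral_le_of_norm_le_const fun θ hθ => ?_
  have hθ' := Set.uIoc_subset_uIcc hθ
  rw [norm_smul]
  exact mul_le_mul (hW θ hθ') (norm_compContinuousLinearMap_le_of_norm_le_one (hL1 θ hθ') _)
    (norm_nonneg _) ((norm_nonneg _).trans (hW θ hθ'))

theorem orbitSeries_apply [CompleteSpace F] (hw : Continuous w) (hL : Continuous L)
    (p : FormalMultilinearSeries ℂ E F) (m : ℕ) (y : E) :
    orbitSeries a b w L p m (fun _ => y) = ∫ θ in a..b, w θ • p m fun _ => L θ y :=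
  ((ContinuousMultilinearMap.apply ℂ (fun _ : Fin m => E) F fun _ => y).intervalIntegral_comp_comm
    ((continuous_orbitSeries_integrand hw hL (p m)).intervalIntegrable a b)).symm

theorem le_radius_orbitSeries {W : ℝ} (hW : ∀ θ ∈ Set.uIcc a b, ‖w θ‖ ≤ W)
    (hL1 : ∀ θ ∈ Set.uIcc a b, ‖L θ‖ ≤ 1) {p : FormalMultilinearSeries ℂ E F} {r : NNReal}
    (hr : r < p.radius) : r ≤ (orbitSeries a b w L p).radius := by
  refine FormalMultilinearSeries.le_radius_of_summable _ <| Summable.of_nonneg_of_le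
    (fun m => by positivity) (fun m => ?_) ((p.summable_norm_mul_pow hr).mul_left (W * |b - a|))
  calc ‖orbitSeries a b w L p m‖ * (r : ℝ) ^ m
      ≤ W * ‖p m‖ * |b - a| * (r : ℝ) ^ m := by
        gcongr
        exact norm_orbitSeries_le hW hL1 p m
    _ = W * |b - a| * (‖p m‖ * (r : ℝ) ^ m) := by ring

theorem hasSum_orbitSeries [CompleteSpace F] {J : E → F} {p : FormalMultilinearSeries ℂ E F}
    {R : ENNReal} (hp : HasFPowerSeriesOnBall J p 0 R) (hw : Continuous w) (hL : Continuous L)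
    (hL1 : ∀ θ ∈ Set.uIcc a b, ‖L θ‖ ≤ 1) {r : NNReal} (hr : r < R) {y : E} (hy : ‖y‖ < r) :
    HasSum (fun m => orbitSeries a b w L p m fun _ => y) (orbitIntegral a b w L J y) := by
  obtain ⟨W, hW⟩ : ∃ W, ∀ θ ∈ Set.uIcc a b, ‖w θ‖ ≤ W :=
    isCompact_uIcc.exists_bound_of_continuousOn hw.continuousOn
  have norm_orbit_le : ∀ θ ∈ Set.uIcc a b, ‖L θ y‖ ≤ r := fun θ hθ =>
    ((L θ).le_of_opNorm_le (hL1 θ hθ) y).trans (by rw [one_mul]; exact hy.le)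
  have hsum := p.summable_norm_mul_pow (hr.trans_le hp.r_le)
  simp_rw [orbitSeries_apply hw hL]
  refine intervalIntegral.hasSum_integral_of_dominated_convergence
    (fun m _ => W * (‖p m‖ * (r : ℝ) ^ m)) (fun m => ?_)
    (fun m => Eventually.of_forall fun θ hθ => ?_)
    (Eventually.of_forall fun _ _ => hsum.mul_left W) (by simp)
    (Eventually.of_forall fun θ hθ => ?_)
  · exact (hw.smul ((p m).cont.comp (continuous_pi fun _ => hL.clm_apply
      continuous_const))).aestronglyMeasurable
  · have hθ' := Set.uIoc_subset_uIcc hθ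
    rw [norm_smul]
    refine mul_le_mul (hW θ hθ') (((p m).le_opNorm _).trans ?_) (norm_nonneg _)
      ((norm_nonneg _).trans (hW θ hθ'))
    rw [Finset.prod_const, Finset.card_univ, Fintype.card_fin]
    gcongr
    exact norm_orbit_le θ hθ'
  · have hlt : ‖L θ y‖ < r := by
      refine ((L θ).le_of_opNorm_le (hL1 θ (Set.uIoc_subset_uIcc hθ)) y).trans_lt ?_
      rwa [one_mul]
    have hmem : L θ y ∈ Metric.eball (0 : E) R := by
      rw [mem_eball_zero_iff, enorm_eq_nnnorm]
      exact lt_trans (by exact_mod_cast hlt) hr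
    simpa using (hp.hasSum hmem).const_smul (w θ)

theorem analyticAt_orbitIntegral [CompleteSpace F] {J : E → F} (hJ : AnalyticAt ℂ J 0)
    (hw : Continuous w) (hL : Continuous L) (hL1 : ∀ θ ∈ Set.uIcc a b, ‖L θ‖ ≤ 1) :
    AnalyticAt ℂ (orbitIntegral a b w L J) 0 := by
  obtain ⟨p, R, hp⟩ := hJ
  obtain ⟨r, hr0, hrR⟩ := ENNReal.lt_iff_exists_nnreal_btwn.1 hp.r_pos
  obtain ⟨W, hW⟩ : ∃ W, ∀ θ ∈ Set.uIcc a b, ‖w θ‖ ≤ W :=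
    isCompact_uIcc.exists_bound_of_continuousOn hw.continuousOn
  refine ⟨orbitSeries a b w L p, r, le_radius_orbitSeries hW hL1 (hrR.trans_le hp.r_le), hr0, ?_⟩
  intro y hy
  rw [zero_add]
  refine hasSum_orbitSeries hp hw hL hL1 hrR ?_
  simpa [enorm_eq_nnnorm, ← NNReal.coe_lt_coe] using hy

theorem continuousAt_comp_orbit {G : Type*} [TopologicalSpace G] {g : E → G} {z : E} {θ : ℝ}
    (hL : Continuous L) (hg : ContinuousAt g (L θ z)) : ContinuousAt (fun θ => g (L θ z)) θ :=
  ContinuousAt.comp (f := fun θ => L θ z) hg (hL.clm_apply continuous_const).continuousAt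

theorem continuousOn_orbitIntegrand (hw : Continuous w) (hL : Continuous L) {J : E → F} {z : E}
    (hJ : ∀ θ ∈ Set.uIcc a b, ContinuousAt J (L θ z)) :
    ContinuousOn (fun θ => w θ • J (L θ z)) (Set.uIcc a b) := fun θ hθ =>
  (hw.continuousAt.smul (continuousAt_comp_orbit hL (hJ θ hθ))).continuousWithinAt

theorem continuousOn_fderiv_orbitIntegrand (hw : Continuous w) (hL : Continuous L) {J : E → F}
    {z : E} (hJ : ∀ θ ∈ Set.uIcc a b, ContinuousAt (fderiv ℂ J) (L θ z)) :
    ContinuousOn (fun θ => w θ • (fderiv ℂ J (L θ z)).comp (L θ)) (Set.uIcc a b) := fun θ hθ =>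
  (hw.continuousAt.smul
    ((continuousAt_comp_orbit hL (hJ θ hθ)).clm_comp hL.continuousAt)).continuousWithinAt

theorem hasFDerivAt_orbitIntegrand {J : E → F} {z : E} {θ : ℝ}
    (hJ : DifferentiableAt ℂ J (L θ z)) :
    HasFDerivAt (fun x => w θ • J (L θ x)) (w θ • (fderiv ℂ J (L θ z)).comp (L θ)) z :=
  (hJ.hasFDerivAt.comp z (L θ).hasFDerivAt).const_smul (w θ)

theorem eventually_hasFDerivAt_orbitIntegral [CompleteSpace F] {J : E → F}
    (hJ : AnalyticAt ℂ J 0) (hw : Continuous w) (hL : Continuous L)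
    (hL1 : ∀ θ ∈ Set.uIcc a b, ‖L θ‖ ≤ 1) :
    ∀ᶠ z in 𝓝 0, HasFDerivAt (orbitIntegral a b w L J)
      (∫ θ in a..b, w θ • (fderiv ℂ J (L θ z)).comp (L θ)) z := by
  have hbound : ∀ᶠ z in 𝓝 0, ‖fderiv ℂ J z‖ < ‖fderiv ℂ J 0‖ + 1 :=
    hJ.fderiv.continuousAt.norm.eventually_lt_const (lt_add_one _)
  filter_upwards [(eventually_forall_contraction
    (hJ.eventually_analyticAt.and hbound)).eventually_nhds] with z hz
  have hanalytic : ∀ᶠ x in 𝓝 z, ∀ θ ∈ Set.uIcc a b, AnalyticAt ℂ J (L θ x) :=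
    hz.mono fun x hx θ hθ => (hx _ (hL1 θ hθ)).1
  refine intervalIntegral.hasFDerivAt_integral_of_dominated_of_fderiv_le
    (bound := fun θ => ‖w θ‖ * (‖fderiv ℂ J 0‖ + 1)) hz
    (F' := fun z θ => w θ • (fderiv ℂ J (L θ z)).comp (L θ)) ?_ ?_ ?_ ?_ ?_ ?_
  · filter_upwards [hanalytic] with x hx
    exact ((continuousOn_orbitIntegrand hw hL fun θ hθ => (hx θ hθ).continuousAt).mono
      Set.uIoc_subset_uIcc).aestronglyMeasurable measurableSet_uIoc
  · exact (continuousOn_orbitIntegrand hw hL fun θ hθ =>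
      (hanalytic.self_of_nhds θ hθ).continuousAt).intervalIntegrable
  · exact ((continuousOn_fderiv_orbitIntegrand hw hL fun θ hθ =>
      (hanalytic.self_of_nhds θ hθ).fderiv.continuousAt).mono
      Set.uIoc_subset_uIcc).aestronglyMeasurable measurableSet_uIoc
  · refine Eventually.of_forall fun θ hθ x hx => ?_
    have hLθ := hL1 θ (Set.uIoc_subset_uIcc hθ)
    calc ‖w θ • (fderiv ℂ J (L θ x)).comp (L θ)‖
        ≤ ‖w θ‖ * (‖fderiv ℂ J (L θ x)‖ * ‖L θ‖) := by
          rw [norm_smul]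
          gcongr
          exact ContinuousLinearMap.opNorm_comp_le _ _
      _ ≤ ‖w θ‖ * (‖fderiv ℂ J 0‖ + 1) := by
          gcongr
          exact (mul_le_of_le_one_right (norm_nonneg _) hLθ).trans (hx _ hLθ).2.le
  · exact (hw.norm.mul continuous_const).intervalIntegrable _ _
  · exact Eventually.of_forall fun θ hθ x hx => hasFDerivAt_orbitIntegrand
      (hx _ (hL1 θ (Set.uIoc_subset_uIcc hθ))).1.differentiableAt

theorem eventually_fderiv_orbitIntegral_apply [CompleteSpace F] {J : E → F}
    (hJ : AnalyticAt ℂ J 0) (hw : Continuous w) (hL : Continuous L)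
    (hL1 : ∀ θ ∈ Set.uIcc a b, ‖L θ‖ ≤ 1) :
    ∀ᶠ z in 𝓝 0, ∀ y, fderiv ℂ (orbitIntegral a b w L J) z y =
      ∫ θ in a..b, w θ • fderiv ℂ J (L θ z) (L θ y) := by
  filter_upwards [eventually_hasFDerivAt_orbitIntegral hJ hw hL hL1,
    eventually_forall_contraction hJ.eventually_analyticAt] with z hz hJz y
  rw [hz.fderiv, ContinuousLinearMap.intervalIntegral_apply
    (continuousOn_fderiv_orbitIntegrand hw hL fun θ hθ =>
      (hJz _ (hL1 θ hθ)).fderiv.continuousAt).intervalIntegrable]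
  rfl

end OrbitIntegral

section DiagonalFlows

variable {ι : Type*}

/-- The derivative of `J` along the linear vector field `∑ i, c i z_i ∂/∂z_i`, at `z`. -/
noncomputable def diagDeriv (c : ι → ℂ) (J : (ι → ℂ) → ℂ) (z : ι → ℂ) : ℂ :=
  fderiv ℂ J z (c * z)

theorem diagDeriv_smul_left (a : ℂ) (c : ι → ℂ) (J : (ι → ℂ) → ℂ) (z : ι → ℂ) :
    diagDeriv (a • c) J z = a * diagDeriv c J z := by
  simp only [diagDeriv, smul_mul_assoc, map_smul, smul_eq_mul]

theorem diagDeriv_sum_left {κ : Type*} (s : Finset κ) (c : κ → ι → ℂ) (J : (ι → ℂ) → ℂ)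
    (z : ι → ℂ) : diagDeriv (∑ k ∈ s, c k) J z = ∑ k ∈ s, diagDeriv (c k) J z := by
  simp only [diagDeriv, Finset.sum_mul, map_sum]

theorem eventuallyEq_diagDeriv {J K : (ι → ℂ) → ℂ} {x : ι → ℂ} (h : J =ᶠ[𝓝 x] K) (c : ι → ℂ) :
    diagDeriv c J =ᶠ[𝓝 x] diagDeriv c K :=
  (h.fderiv (𝕜 := ℂ)).mono fun z hz => by simp only [diagDeriv, hz]

theorem diagDeriv_add [Finite ι] {J K : (ι → ℂ) → ℂ} {c z : ι → ℂ} (hJ : DifferentiableAt ℂ J z)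
    (hK : DifferentiableAt ℂ K z) :
    diagDeriv c (fun z => J z + K z) z = diagDeriv c J z + diagDeriv c K z := by
  cases nonempty_fintype ι
  rw [diagDeriv, fderiv_fun_add hJ hK]
  rfl

theorem diagDeriv_sub [Finite ι] {J K : (ι → ℂ) → ℂ} {c z : ι → ℂ} (hJ : DifferentiableAt ℂ J z)
    (hK : DifferentiableAt ℂ K z) :
    diagDeriv c (fun z => J z - K z) z = diagDeriv c J z - diagDeriv c K z := by
  cases nonempty_fintype ι
  rw [diagDeriv, fderiv_fun_sub hJ hK]
  rfl

theorem diagDeriv_mul [Finite ι] {J K : (ι → ℂ) → ℂ} {c z : ι → ℂ} (hJ : DifferentiableAt ℂ J z)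
    (hK : DifferentiableAt ℂ K z) :
    diagDeriv c (fun z => J z * K z) z = J z * diagDeriv c K z + diagDeriv c J z * K z := by
  cases nonempty_fintype ι
  rw [diagDeriv, fderiv_fun_mul hJ hK]
  simp only [diagDeriv, add_apply, smul_apply, smul_eq_mul]
  ring

variable [Fintype ι]

/-- The diagonal linear map with entries `exp (c i)`; `fun s => diagExp (s • c)` is the flow of the
vector field `∑ i, c i z_i ∂/∂z_i`. -/
noncomputable def diagExp (c : ι → ℂ) : (ι → ℂ) →L[ℂ] (ι → ℂ) :=
  ContinuousLinearMap.mul ℂ (ι → ℂ) fun i => Complex.exp (c i)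

variable {c : ι → ℂ} {J : (ι → ℂ) → ℂ} {z : ι → ℂ}

@[simp]
theorem diagExp_apply (c z : ι → ℂ) (i : ι) : diagExp c z i = Complex.exp (c i) * z i := rfl

@[simp]
theorem diagExp_zero (z : ι → ℂ) : diagExp 0 z = z := by ext; simp

theorem diagExp_mul (c b z : ι → ℂ) : diagExp c (b * z) = b * diagExp c z := by
  ext i
  simp only [diagExp_apply, Pi.mul_apply]
  ring

theorem continuous_diagExp : Continuous (diagExp : (ι → ℂ) → _) :=
  (ContinuousLinearMap.mul ℂ (ι → ℂ)).continuous.comp <|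
    continuous_pi fun i => Complex.continuous_exp.comp (continuous_apply i)

theorem prod_diagExp (c z : ι → ℂ) :
    ∏ i, diagExp c z i = Complex.exp (∑ i, c i) * ∏ i, z i := by
  simp only [diagExp_apply, Finset.prod_mul_distrib, Complex.exp_sum]

theorem analyticAt_diagDeriv (hJ : AnalyticAt ℂ J z) (c : ι → ℂ) :
    AnalyticAt ℂ (diagDeriv c J) z :=
  ((ContinuousLinearMap.apply ℂ ℂ).analyticAt_bilinear (c * z, fderiv ℂ J z)).comp_of_eq
    (((ContinuousLinearMap.mul ℂ (ι → ℂ) c).analyticAt z).prod hJ.fderiv) rfl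

theorem hasDerivAt_comp_diagExp (c z : ι → ℂ) (t : ℂ)
    (hJ : DifferentiableAt ℂ J (diagExp (t • c) z)) :
    HasDerivAt (fun t : ℂ => J (diagExp (t • c) z)) (diagDeriv c J (diagExp (t • c) z)) t := by
  have hcurve : HasDerivAt (fun t : ℂ => diagExp (t • c) z) (c * diagExp (t • c) z) t := by
    refine hasDerivAt_pi.2 fun i => ?_
    refine (((hasDerivAt_id t).mul_const (c i)).cexp.mul_const (z i)).congr_deriv ?_
    simp only [id_eq, one_mul, Pi.mul_apply, diagExp_apply, Pi.smul_apply, smul_eq_mul]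
    ring
  exact hJ.hasFDerivAt.comp_hasDerivAt t hcurve

/-- Along an orbit each `|z_i|` is log-linear in time, hence maximal at one of the two ends. -/
theorem norm_diagExp_smul_le {s : ℝ} (hs : s ∈ Set.Icc (0 : ℝ) 1) (c z : ι → ℂ) :
    ‖diagExp ((s : ℂ) • c) z‖ ≤ max ‖z‖ ‖diagExp c z‖ := by
  refine (pi_norm_le_iff_of_nonneg (le_max_of_le_left (norm_nonneg z))).2 fun i => ?_
  have hre : ‖diagExp ((s : ℂ) • c) z i‖ = Real.exp (s * (c i).re) * ‖z i‖ := by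
    simp [Complex.norm_exp]
  rw [hre]
  rcases le_total (c i).re 0 with hneg | hpos
  · calc Real.exp (s * (c i).re) * ‖z i‖ ≤ 1 * ‖z i‖ := by
          gcongr
          exact Real.exp_le_one_iff.2 (mul_nonpos_of_nonneg_of_nonpos hs.1 hneg)
      _ ≤ max ‖z‖ ‖diagExp c z‖ := by
          rw [one_mul]
          exact (norm_le_pi_norm z i).trans (le_max_left _ _)
  · calc Real.exp (s * (c i).re) * ‖z i‖ ≤ Real.exp (c i).re * ‖z i‖ := by
          gcongr
          exact mul_le_of_le_one_left hpos hs.2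
      _ = ‖diagExp c z i‖ := by simp [Complex.norm_exp]
      _ ≤ max ‖z‖ ‖diagExp c z‖ := (norm_le_pi_norm _ i).trans (le_max_right _ _)

theorem apply_diagExp_eq_of_diagDeriv_eq_zero {r : ℝ}
    (hJ : ∀ x ∈ Metric.ball 0 r, DifferentiableAt ℂ J x ∧ diagDeriv c J x = 0)
    (hz : z ∈ Metric.ball 0 r) (hcz : diagExp c z ∈ Metric.ball 0 r) :
    J (diagExp c z) = J z := by
  rw [mem_ball_zero_iff] at hz hcz
  have horbit : ∀ s ∈ Set.Icc (0 : ℝ) 1,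
      HasDerivAt (fun s : ℝ => J (diagExp ((s : ℂ) • c) z)) 0 s := fun s hs => by
    obtain ⟨hdiff, hzero⟩ := hJ (diagExp ((s : ℂ) • c) z) <| by
      rw [mem_ball_zero_iff]
      exact (norm_diagExp_smul_le hs c z).trans_lt (max_lt hz hcz)
    simpa only [hzero] using (hasDerivAt_comp_diagExp c z s hdiff).comp_ofReal
  have hconst := constant_of_has_deriv_right_zero
    (fun s hs => (horbit s hs).continuousAt.continuousWithinAt)
    (fun s hs => (horbit s (Set.Ico_subset_Icc_self hs)).hasDerivWithinAt) 1 (by simp)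
  simpa using hconst

theorem eventually_apply_diagExp_smul_eq {u : (ι → ℂ) → ℂ} (hJ : AnalyticAt ℂ J 0)
    (hcJ : diagDeriv c J =ᶠ[𝓝 0] 0) (hu : ContinuousAt u 0) :
    ∀ᶠ z in 𝓝 0, J (diagExp (u z • c) z) = J z := by
  obtain ⟨r, hr, hball⟩ := Metric.eventually_nhds_iff_ball.1 (hJ.eventually_analyticAt.and hcJ)
  have hcont : ContinuousAt (fun z => diagExp (u z • c) z) 0 :=
    (continuous_diagExp.continuousAt.comp (hu.smul continuousAt_const)).clm_apply continuousAt_id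
  filter_upwards [Metric.ball_mem_nhds 0 hr,
    hcont.preimage_mem_nhds (Metric.ball_mem_nhds _ hr)] with z hz hcz
  rw [Set.mem_preimage, map_zero] at hcz
  refine apply_diagExp_eq_of_diagDeriv_eq_zero (fun x hx => ⟨(hball x hx).1.differentiableAt, ?_⟩)
    hz hcz
  rw [diagDeriv_smul_left, (hball x hx).2, Pi.zero_apply, mul_zero]

end DiagonalFlows

section CircleMeans

variable {ι : Type*} [Fintype ι]

/-- The circle action with weights `c`; it has period `2π` when the weights are integers. -/
noncomputable def circleAction (c : ι → ℂ) (θ : ℝ) : (ι → ℂ) →L[ℂ] (ι → ℂ) :=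
  diagExp ((θ * Complex.I : ℂ) • c)

/-- The average of `J` over the orbit of `z` under the circle action with weights `c`. -/
noncomputable def circleMean (c : ι → ℂ) : ((ι → ℂ) → ℂ) → (ι → ℂ) → ℂ :=
  orbitIntegral 0 (2 * Real.pi) (fun _ => (2 * Real.pi : ℂ)⁻¹) (circleAction c)

variable {c : ι → ℂ} {J K : (ι → ℂ) → ℂ}

theorem continuous_circleAction (c : ι → ℂ) : Continuous (circleAction c) :=
  continuous_diagExp.comp (by fun_prop)

theorem circleAction_two_pi (hc : ∀ i, ∃ m : ℤ, c i = m) (z : ι → ℂ) :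
    circleAction c (2 * Real.pi) z = z := by
  ext i
  obtain ⟨m, hm⟩ := hc i
  have hperiod : ((2 * Real.pi : ℝ) * Complex.I : ℂ) * m = m * (2 * Real.pi * Complex.I) := by
    push_cast
    ring
  rw [circleAction, diagExp_apply, Pi.smul_apply, smul_eq_mul, hm, hperiod,
    Complex.exp_int_mul_two_pi_mul_I, one_mul]

theorem norm_circleAction_le_one (hc : ∀ i, ∃ m : ℤ, c i = m) (θ : ℝ) : ‖circleAction c θ‖ ≤ 1 := by
  refine (ContinuousLinearMap.opNorm_mul_apply_le ℂ _ _).trans <|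
    (pi_norm_le_iff_of_nonneg zero_le_one).2 fun i => ?_
  obtain ⟨m, hm⟩ := hc i
  have harg : ((θ * Complex.I : ℂ) • c) i = ((θ * m : ℝ) : ℂ) * Complex.I := by
    rw [Pi.smul_apply, smul_eq_mul, hm]
    push_cast
    ring
  rw [harg, Complex.norm_exp_ofReal_mul_I]

theorem eventually_diagDeriv_orbitIntegral_circleAction (hc : ∀ i, ∃ m : ℤ, c i = m)
    (hJ : AnalyticAt ℂ J 0) {a b : ℝ} {w : ℝ → ℂ} (hw : Continuous w) (c' : ι → ℂ) :
    diagDeriv c' (orbitIntegral a b w (circleAction c) J) =ᶠ[𝓝 0]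
      orbitIntegral a b w (circleAction c) (diagDeriv c' J) := by
  filter_upwards [eventually_fderiv_orbitIntegral_apply hJ hw (continuous_circleAction c)
    fun θ _ => norm_circleAction_le_one hc θ] with z hz
  rw [diagDeriv, hz]
  simp only [circleAction, diagExp_mul, orbitIntegral, diagDeriv]

theorem hasDerivAt_comp_circleAction {z : ι → ℂ} {θ : ℝ}
    (hJ : DifferentiableAt ℂ J (circleAction c θ z)) :
    HasDerivAt (fun θ : ℝ => J (circleAction c θ z))
      (Complex.I * diagDeriv c J (circleAction c θ z)) θ := by
  have hI := (hasDerivAt_id (θ : ℂ)).mul_const Complex.I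
  rw [one_mul] at hI
  exact (((hasDerivAt_comp_diagExp c z _ hJ).comp (θ : ℂ) hI).comp_ofReal).congr_deriv
    (mul_comm _ _)

theorem eventually_orbitIntegral_circleAction_diagDeriv (hc : ∀ i, ∃ m : ℤ, c i = m)
    (hJ : AnalyticAt ℂ J 0) {w w' : ℝ → ℂ} (hw : ∀ θ, HasDerivAt w (w' θ) θ)
    (hw' : Continuous w') :
    ∀ᶠ z in 𝓝 0, orbitIntegral 0 (2 * Real.pi) w (circleAction c) (diagDeriv c J) z =
      -Complex.I * ((w (2 * Real.pi) - w 0) * J z -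
        orbitIntegral 0 (2 * Real.pi) w' (circleAction c) J z) := by
  filter_upwards [eventually_forall_contraction hJ.eventually_analyticAt] with z hz
  have hJz : ∀ θ, AnalyticAt ℂ J (circleAction c θ z) := fun θ =>
    hz _ (norm_circleAction_le_one hc θ)
  have hcont : Continuous fun θ => Complex.I * diagDeriv c J (circleAction c θ z) :=
    continuous_const.mul <| continuous_iff_continuousAt.2 fun θ =>
      continuousAt_comp_orbit (continuous_circleAction c)
        (analyticAt_diagDeriv (hJz θ) c).continuousAt
  have hparts := intervalIntegral.integral_mul_deriv_eq_deriv_mul (a := 0) (b := 2 * Real.pi)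
    (fun θ _ => hw θ) (fun θ _ => hasDerivAt_comp_circleAction (hJz θ).differentiableAt)
    (hw'.intervalIntegrable _ _) (hcont.intervalIntegrable _ _)
  have hrot0 : circleAction c 0 z = z := by simp [circleAction]
  simp only [mul_left_comm (w _) Complex.I, intervalIntegral.integral_const_mul,
    circleAction_two_pi hc, hrot0] at hparts
  simp only [orbitIntegral, smul_eq_mul]
  linear_combination -Complex.I * hparts +
    (∫ θ in (0 : ℝ)..2 * Real.pi, w θ * diagDeriv c J (circleAction c θ z)) * Complex.I_mul_I

theorem analyticAt_circleMean (hc : ∀ i, ∃ m : ℤ, c i = m) (hJ : AnalyticAt ℂ J 0) :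
    AnalyticAt ℂ (circleMean c J) 0 :=
  analyticAt_orbitIntegral hJ continuous_const (continuous_circleAction c)
    fun θ _ => norm_circleAction_le_one hc θ

theorem eventuallyEq_circleMean (hc : ∀ i, ∃ m : ℤ, c i = m) (h : J =ᶠ[𝓝 0] K) :
    circleMean c J =ᶠ[𝓝 0] circleMean c K := by
  filter_upwards [eventually_forall_contraction h] with z hz
  exact intervalIntegral.integral_congr fun θ _ => by
    simp only [hz _ (norm_circleAction_le_one hc θ)]

theorem circleMean_eq_self_of_forall_circleAction {z : ι → ℂ}
    (h : ∀ θ, J (circleAction c θ z) = J z) : circleMean c J z = J z := by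
  simp only [circleMean, orbitIntegral, h, intervalIntegral.integral_const, sub_zero,
    Complex.real_smul, smul_eq_mul]
  push_cast
  field_simp

theorem circleMean_zero (c : ι → ℂ) (J : (ι → ℂ) → ℂ) : circleMean c J 0 = J 0 :=
  circleMean_eq_self_of_forall_circleAction fun θ => by rw [map_zero]

theorem circleMean_comp_prod (hc : ∑ i, c i = 0) (h : ℂ → ℂ) :
    circleMean c (fun z => h (∏ i, z i)) = fun z => h (∏ i, z i) := by
  funext z
  refine circleMean_eq_self_of_forall_circleAction fun θ => ?_
  simp only [circleAction, prod_diagExp, Pi.smul_apply, ← Finset.smul_sum, hc, smul_zero,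
    Complex.exp_zero, one_mul]

theorem eventually_circleMean_sum (hc : ∀ i, ∃ m : ℤ, c i = m) {κ : Type*} (s : Finset κ)
    {G : κ → (ι → ℂ) → ℂ} (hG : ∀ k, AnalyticAt ℂ (G k) 0) :
    circleMean c (fun z => ∑ k ∈ s, G k z) =ᶠ[𝓝 0] fun z => ∑ k ∈ s, circleMean c (G k) z := by
  have hana : ∀ᶠ z in 𝓝 0, ∀ k ∈ s, AnalyticAt ℂ (G k) z :=
    (eventually_all_finset s).2 fun k _ => (hG k).eventually_analyticAt
  filter_upwards [eventually_forall_contraction hana] with z hz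
  simp only [circleMean, orbitIntegral, Finset.smul_sum]
  refine intervalIntegral.integral_finsetSum fun k hk => ?_
  exact (continuousOn_orbitIntegrand continuous_const (continuous_circleAction c) fun θ _ =>
    (hz _ (norm_circleAction_le_one hc θ) k hk).continuousAt).intervalIntegrable

theorem diagDeriv_circleMean (hc : ∀ i, ∃ m : ℤ, c i = m) (hJ : AnalyticAt ℂ J 0) (c' : ι → ℂ) :
    diagDeriv c' (circleMean c J) =ᶠ[𝓝 0] circleMean c (diagDeriv c' J) :=
  eventually_diagDeriv_orbitIntegral_circleAction hc hJ continuous_const c'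

theorem circleMean_diagDeriv_self (hc : ∀ i, ∃ m : ℤ, c i = m) (hJ : AnalyticAt ℂ J 0) :
    circleMean c (diagDeriv c J) =ᶠ[𝓝 0] 0 := by
  filter_upwards [eventually_orbitIntegral_circleAction_diagDeriv hc hJ
    (fun θ => hasDerivAt_const θ (2 * Real.pi : ℂ)⁻¹) continuous_const] with z hz
  rw [circleMean, hz]
  simp [orbitIntegral]

theorem diagDeriv_circleMean_self (hc : ∀ i, ∃ m : ℤ, c i = m) (hJ : AnalyticAt ℂ J 0) :
    diagDeriv c (circleMean c J) =ᶠ[𝓝 0] 0 :=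
  (diagDeriv_circleMean hc hJ c).trans (circleMean_diagDeriv_self hc hJ)

theorem diagDeriv_circleMean_eq_zero (hc : ∀ i, ∃ m : ℤ, c i = m) (hJ : AnalyticAt ℂ J 0)
    {c' : ι → ℂ} (h : diagDeriv c' J =ᶠ[𝓝 0] 0) : diagDeriv c' (circleMean c J) =ᶠ[𝓝 0] 0 := by
  refine (diagDeriv_circleMean hc hJ c').trans ((eventuallyEq_circleMean hc h).trans ?_)
  exact Eventually.of_forall fun z => by simp [circleMean, orbitIntegral]

/-- Integration by parts shows that `B z = (2π)⁻¹ ∫ iθ J(circleAction c θ z) dθ` works. -/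
theorem exists_eventuallyEq_circleMean_add_diagDeriv (hc : ∀ i, ∃ m : ℤ, c i = m)
    (hJ : AnalyticAt ℂ J 0) :
    ∃ B : (ι → ℂ) → ℂ, AnalyticAt ℂ B 0 ∧
      ∀ᶠ z in 𝓝 0, J z = circleMean c J z + diagDeriv c B z := by
  let w : ℝ → ℂ := fun θ => θ * (Complex.I * (2 * Real.pi : ℂ)⁻¹)
  have hw : Continuous w := by fun_prop
  have hw' : ∀ θ, HasDerivAt w (Complex.I * (2 * Real.pi : ℂ)⁻¹) θ := fun θ => by
    simpa [w] using (hasDerivAt_id (θ : ℂ)).comp_ofReal.mul_const (Complex.I * (2 * Real.pi : ℂ)⁻¹)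
  refine ⟨orbitIntegral 0 (2 * Real.pi) w (circleAction c) J,
    analyticAt_orbitIntegral hJ hw (continuous_circleAction c)
      fun θ _ => norm_circleAction_le_one hc θ, ?_⟩
  filter_upwards [eventually_orbitIntegral_circleAction_diagDeriv hc hJ hw' continuous_const,
    eventually_diagDeriv_orbitIntegral_circleAction hc hJ hw c] with z hparts hcomm
  have hmean : orbitIntegral 0 (2 * Real.pi) (fun _ => Complex.I * (2 * Real.pi : ℂ)⁻¹)
      (circleAction c) J z = Complex.I * circleMean c J z := by
    simp only [circleMean, orbitIntegral, smul_eq_mul, mul_assoc,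
      intervalIntegral.integral_const_mul]
  have hw2 : w (2 * Real.pi) - w 0 = Complex.I := by
    simp only [w]
    push_cast
    field_simp
    ring
  rw [hcomm, hparts, hmean, hw2]
  linear_combination (J z - circleMean c J z) * Complex.I_mul_I

end CircleMeans

section ExpScale

variable {ι : Type*} [Fintype ι]

/-- The map multiplying the `i`-th coordinate of `z` by `exp (v z i)`. Every biholomorphic
germ preserving each coordinate hyperplane has this form. -/
noncomputable def expScale (v : (ι → ℂ) → ι → ℂ) (z : ι → ℂ) : ι → ℂ :=
  diagExp (v z) z

variable {c z : ι → ℂ} {u : (ι → ℂ) → ℂ} {v : (ι → ℂ) → ι → ℂ}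

@[simp]
theorem expScale_zero (v : (ι → ℂ) → ι → ℂ) : expScale v 0 = 0 :=
  map_zero _

theorem analyticAt_coord (i : ι) (z : ι → ℂ) : AnalyticAt ℂ (fun z : ι → ℂ => z i) z :=
  (ContinuousLinearMap.proj (R := ℂ) (φ := fun _ : ι => ℂ) i).analyticAt z

theorem analyticAt_expScale (hv : AnalyticAt ℂ v z) : AnalyticAt ℂ (expScale v) z :=
  analyticAt_pi_iff.2 fun i => (analyticAt_pi_iff.1 hv i).cexp.mul (analyticAt_coord i z)

theorem hasFDerivAt_expScale {v' : (ι → ℂ) →L[ℂ] (ι → ℂ)} (hv : HasFDerivAt v v' z) :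
    HasFDerivAt (expScale v)
      (diagExp (v z) ∘L (.id ℂ (ι → ℂ) + ContinuousLinearMap.mul ℂ (ι → ℂ) z ∘L v')) z := by
  refine hasFDerivAt_pi'.2 fun i => ?_
  refine ((hasFDerivAt_pi'.1 hv i).cexp.mul
    (ContinuousLinearMap.proj (R := ℂ) (φ := fun _ : ι => ℂ) i).hasFDerivAt).congr_fderiv ?_
  ext y
  simp only [ContinuousLinearMap.proj_apply, add_apply, smul_apply, smul_eq_mul,
    ContinuousLinearMap.comp_apply, ContinuousLinearMap.comp_add, ContinuousLinearMap.comp_id,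
    diagExp_apply, ContinuousLinearMap.mul_apply', Pi.mul_apply, add_right_inj]
  ring

theorem diagDeriv_comp_expScale {f : (ι → ℂ) → ℂ} (hf : DifferentiableAt ℂ f (expScale v z))
    (hv : DifferentiableAt ℂ v z) :
    diagDeriv c (fun z => f (expScale v z)) z =
      diagDeriv (c + fderiv ℂ v z (c * z)) f (expScale v z) := by
  have hscale := hasFDerivAt_expScale hv.hasFDerivAt
  rw [diagDeriv, fderiv_fun_comp z hf hscale.differentiableAt, hscale.fderiv, diagDeriv,
    ContinuousLinearMap.comp_apply, ContinuousLinearMap.comp_apply, expScale, ← diagExp_mul,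
    add_mul]
  simp [mul_comm z]

theorem diagDeriv_comp_expScale_smul {f : (ι → ℂ) → ℂ}
    (hf : DifferentiableAt ℂ f (expScale (fun z => u z • c) z)) (hu : DifferentiableAt ℂ u z) :
    diagDeriv c (fun z => f (expScale (fun z => u z • c) z)) z =
      (1 + diagDeriv c u z) * diagDeriv c f (expScale (fun z => u z • c) z) := by
  have hfield : c + fderiv ℂ (fun z => u z • c) z (c * z) = (1 + diagDeriv c u z) • c := by
    rw [(hu.hasFDerivAt.smul_const c).fderiv, add_smul, one_smul]
    rfl
  rw [diagDeriv_comp_expScale hf (hu.smul_const c), hfield, diagDeriv_smul_left]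

theorem prod_expScale (v : (ι → ℂ) → ι → ℂ) (z : ι → ℂ) :
    ∏ i, expScale v z i = Complex.exp (∑ i, v z i) * ∏ i, z i :=
  prod_diagExp (v z) z

theorem prod_expScale_smul (u : (ι → ℂ) → ℂ) (c z : ι → ℂ) :
    ∏ i, expScale (fun z => u z • c) z i = Complex.exp (u z * ∑ i, c i) * ∏ i, z i := by
  simp only [prod_expScale, Pi.smul_apply, smul_eq_mul, Finset.mul_sum]

theorem det_diagExp (c : ι → ℂ) : (diagExp c).det = Complex.exp (∑ i, c i) := by
  have hpi : diagExp c = .pi fun i =>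
      (ContinuousLinearMap.mul ℂ ℂ (Complex.exp (c i))).comp (.proj i) := rfl
  rw [hpi, ContinuousLinearMap.det_pi, Complex.exp_sum]
  simp [ContinuousLinearMap.det]

theorem det_fderiv_expScale_zero_ne_zero (hv : DifferentiableAt ℂ v 0) :
    (fderiv ℂ (expScale v) 0).det ≠ 0 := by
  have hfd : fderiv ℂ (expScale v) 0 = diagExp (v 0) := by
    rw [(hasFDerivAt_expScale hv.hasFDerivAt).fderiv]
    ext
    simp
  rw [hfd, det_diagExp]
  exact Complex.exp_ne_zero _

theorem det_fderiv_expScale_smul (c : ι → ℂ) (hu : DifferentiableAt ℂ u z) :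
    (fderiv ℂ (expScale fun z => u z • c) z).det =
      Complex.exp (u z * ∑ i, c i) * (1 + diagDeriv c u z) := by
  have hrank : (ContinuousLinearMap.id ℂ (ι → ℂ) + ContinuousLinearMap.mul ℂ (ι → ℂ) z ∘L
      (fderiv ℂ u z).smulRight c).toLinearMap =
      LinearMap.transvection (fderiv ℂ u z).toLinearMap (c * z) := by
    ext y
    simp [LinearMap.transvection.apply, mul_comm]
  rw [(hasFDerivAt_expScale (hu.hasFDerivAt.smul_const c)).fderiv, ContinuousLinearMap.det,
    ContinuousLinearMap.toLinearMap_comp, LinearMap.det_comp, hrank,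
    LinearMap.transvection.det, ← ContinuousLinearMap.det, det_diagExp]
  simp [Finset.mul_sum, diagDeriv]

theorem analyticAt_prod_coord (z : ι → ℂ) : AnalyticAt ℂ (fun z : ι → ℂ => ∏ i, z i) z :=
  Finset.analyticAt_fun_prod _ fun i _ => analyticAt_coord i z

theorem diagDeriv_prod_coord (c z : ι → ℂ) :
    diagDeriv c (fun z => ∏ i, z i) z = (∑ i, c i) * ∏ i, z i := by
  have hflow := hasDerivAt_comp_diagExp c z 0
    (analyticAt_prod_coord (diagExp ((0 : ℂ) • c) z)).differentiableAt
  have hexp : HasDerivAt (fun t => Complex.exp (t * ∑ i, c i) * ∏ i, z i)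
      ((∑ i, c i) * ∏ i, z i) 0 := by
    simpa using (((hasDerivAt_id (0 : ℂ)).mul_const (∑ i, c i)).cexp).mul_const (∏ i, z i)
  simp only [prod_diagExp, Pi.smul_apply, smul_eq_mul, ← Finset.mul_sum, zero_smul,
    diagExp_zero] at hflow
  exact hflow.unique hexp

theorem diagDeriv_comp_prod_coord {ψ : ℂ → ℂ} (hψ : DifferentiableAt ℂ ψ (∏ i, z i)) :
    diagDeriv c (fun z => ψ (∏ i, z i)) z =
      deriv ψ (∏ i, z i) * ((∑ i, c i) * ∏ i, z i) := by
  rw [← diagDeriv_prod_coord, diagDeriv, fderiv_fun_comp z hψ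
    (analyticAt_prod_coord z).differentiableAt]
  simp [diagDeriv, mul_comm]

end ExpScale

section ProductOfCoordinates

variable {ι : Type*} [Fintype ι]

theorem tendsto_prod_coord [Nonempty ι] :
    Tendsto (fun z : ι → ℂ => ∏ i, z i) (𝓝 0) (𝓝 0) := by
  simpa using (analyticAt_prod_coord (0 : ι → ℂ)).continuousAt.tendsto

theorem analyticAt_comp_prod_coord [Nonempty ι] {h : ℂ → ℂ} (hh : AnalyticAt ℂ h 0) :
    AnalyticAt ℂ (fun z : ι → ℂ => h (∏ i, z i)) 0 :=
  AnalyticAt.fun_comp_of_eq hh (analyticAt_prod_coord 0) (by simp)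

theorem dense_setOf_prod_coord_ne_zero : Dense {z : ι → ℂ | ∏ i, z i ≠ 0} := by
  have hdense := dense_pi (Set.univ : Set ι) (s := fun _ => ({0}ᶜ : Set ℂ))
    fun _ _ => dense_compl_singleton 0
  refine hdense.mono fun z hz => ?_
  exact Finset.prod_ne_zero_iff.2 fun i _ => hz i (Set.mem_univ i)

theorem eventuallyEq_of_prod_coord_ne_zero {f g : (ι → ℂ) → ℂ} (hf : AnalyticAt ℂ f 0)
    (hg : AnalyticAt ℂ g 0) (h : ∀ᶠ z in 𝓝 0, ∏ i, z i ≠ 0 → f z = g z) : f =ᶠ[𝓝 0] g := by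
  obtain ⟨r, hr, hball⟩ := Metric.eventually_nhds_iff_ball.1
    (h.and (hf.eventually_analyticAt.and hg.eventually_analyticAt))
  have heqOn : Set.EqOn f g (Metric.ball 0 r) := by
    refine Set.EqOn.of_subset_closure (s := Metric.ball 0 r ∩ {z : ι → ℂ | ∏ i, z i ≠ 0})
      (fun z hz => (hball z hz.1).1 hz.2)
      (fun z hz => (hball z hz).2.1.continuousAt.continuousWithinAt)
      (fun z hz => (hball z hz).2.2.continuousAt.continuousWithinAt) Set.inter_subset_left
      (dense_setOf_prod_coord_ne_zero.open_subset_closure_inter Metric.isOpen_ball)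
  exact heqOn.eventuallyEq_of_mem (Metric.ball_mem_nhds 0 hr)

theorem exists_diagExp_eq_of_prod_eq (o : ι) {z z' : ι → ℂ} (hz : ∏ i, z i ≠ 0)
    (hprod : ∏ i, z' i = ∏ i, z i) : ∃ c : ι → ℂ, ∑ i, c i = 0 ∧ diagExp c z = z' := by
  classical
  have hz0 : ∀ i, z i ≠ 0 := fun i => Finset.prod_ne_zero_iff.1 hz i (Finset.mem_univ i)
  have hz0' : ∀ i, z' i ≠ 0 := fun i =>
    Finset.prod_ne_zero_iff.1 (hprod.trans_ne hz) i (Finset.mem_univ i)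
  let b : ι → ℂ := fun i => Complex.log (z' i / z i)
  have hexp : ∀ i, Complex.exp (b i) = z' i / z i := fun i =>
    Complex.exp_log (div_ne_zero (hz0' i) (hz0 i))
  have hsum : Complex.exp (∑ i, b i) = 1 := by
    rw [Complex.exp_sum, Finset.prod_congr rfl fun i _ => hexp i, Finset.prod_div_distrib, hprod,
      div_self hz]
  refine ⟨b - Pi.single o (∑ i, b i), by simp, ?_⟩
  ext i
  have hshift : Complex.exp ((Pi.single o (∑ i, b i) : ι → ℂ) i) = 1 := by
    rcases eq_or_ne i o with rfl | hi
    · rw [Pi.single_eq_same, hsum]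
    · rw [Pi.single_eq_of_ne hi, Complex.exp_zero]
  rw [diagExp_apply, Pi.sub_apply, Complex.exp_sub, hshift, hexp, div_one,
    div_mul_cancel₀ _ (hz0 i)]

theorem exists_analyticAt_section_prod_coord (o : ι) {r : ℝ} (hr : 0 < r) :
    ∃ p : ℂ → ι → ℂ, AnalyticAt ℂ p 0 ∧ p 0 ∈ Metric.ball 0 r ∧ ∀ t, ∏ i, p t i = t := by
  classical
  obtain ⟨ε, hε, hεr⟩ := exists_between hr
  have hε0 : (ε : ℂ) ≠ 0 := by exact_mod_cast hε.ne'
  refine ⟨fun t => Function.update (fun _ => (ε : ℂ)) o (t / ∏ _i ∈ Finset.univ \ {o}, (ε : ℂ)),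
    analyticAt_pi_iff.2 fun i => ?_, ?_, fun t => ?_⟩
  · rcases eq_or_ne i o with rfl | hi
    · simp only [Function.update_self]
      exact analyticAt_id.div_const
    · simp only [Function.update_of_ne hi]
      exact analyticAt_const
  · rw [mem_ball_zero_iff]
    refine ((pi_norm_le_iff_of_nonneg hε.le).2 fun i => ?_).trans_lt hεr
    rcases eq_or_ne i o with rfl | hi
    · simp [hε.le]
    · simp [Function.update_of_ne hi, abs_of_pos hε]
  · rw [Finset.prod_update_of_mem (Finset.mem_univ o)]
    exact div_mul_cancel₀ _ (Finset.prod_ne_zero_iff.2 fun _ _ => hε0)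

end ProductOfCoordinates

section FunctionsOfProduct

variable {ι : Type*} [DecidableEq ι]

/-- The weights of the field `z_k ∂/∂z_k - z_o ∂/∂z_o`, which preserves `∏ i, z i`. -/
def coordExchange (o k : ι) : ι → ℂ :=
  Pi.single k 1 - Pi.single o 1

theorem coordExchange_integral (o k i : ι) : ∃ m : ℤ, coordExchange o k i = m :=
  ⟨(Pi.single k 1 - Pi.single o 1 : ι → ℤ) i, by
    simp only [coordExchange, Pi.sub_apply, Pi.single_apply]
    split_ifs <;> simp⟩

variable [Fintype ι]

theorem sum_coordExchange (o k : ι) : ∑ i, coordExchange o k i = 0 := by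
  simp [coordExchange]

theorem diagDeriv_eq_zero_of_coordExchange {o : ι} {J : (ι → ℂ) → ℂ} {z c : ι → ℂ}
    (hJ : ∀ k, diagDeriv (coordExchange o k) J z = 0) (hc : ∑ i, c i = 0) :
    diagDeriv c J z = 0 := by
  have hspan : c = ∑ k, c k • coordExchange o k := by
    simp only [coordExchange, smul_sub, Finset.sum_sub_distrib, ← Finset.sum_smul, hc, zero_smul,
      sub_zero]
    ext i
    simp [Pi.single_apply]
  rw [hspan, diagDeriv_sum_left]
  simp [diagDeriv_smul_left, hJ]

theorem exists_eventuallyEq_comp_prod_coord (o : ι) {J : (ι → ℂ) → ℂ} (hJ : AnalyticAt ℂ J 0)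
    (hinv : ∀ k, diagDeriv (coordExchange o k) J =ᶠ[𝓝 0] 0) :
    ∃ j : ℂ → ℂ, AnalyticAt ℂ j 0 ∧ J =ᶠ[𝓝 0] fun z => j (∏ i, z i) := by
  have : Nonempty ι := ⟨o⟩
  obtain ⟨r, hr, hball⟩ := Metric.eventually_nhds_iff_ball.1
    (hJ.eventually_analyticAt.and (eventually_all.2 hinv))
  obtain ⟨p, hp, hp0, hprod⟩ := exists_analyticAt_section_prod_coord o hr
  have hj : AnalyticAt ℂ (fun t => J (p t)) 0 := (hball _ hp0).1.comp hp
  refine ⟨fun t => J (p t), hj,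
    eventuallyEq_of_prod_coord_ne_zero hJ (analyticAt_comp_prod_coord hj) ?_⟩
  filter_upwards [Metric.ball_mem_nhds 0 hr, tendsto_prod_coord.eventually
    (hp.continuousAt.preimage_mem_nhds (Metric.isOpen_ball.mem_nhds hp0))] with z hz hpz hz0
  obtain ⟨c, hc, hcz⟩ := exists_diagExp_eq_of_prod_eq o hz0 (hprod (∏ i, z i))
  rw [← hcz]
  refine (apply_diagExp_eq_of_diagDeriv_eq_zero (fun x hx => ⟨(hball x hx).1.differentiableAt,
    diagDeriv_eq_zero_of_coordExchange (hball x hx).2 hc⟩) hz ?_).symm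
  rwa [hcz]

theorem eventually_det_fderiv_expScale_single (o : ι) {u : (ι → ℂ) → ℂ} {ψ : ℂ → ℂ}
    (hu : AnalyticAt ℂ u 0) (hψ : AnalyticAt ℂ ψ 0)
    (h : ∀ᶠ z in 𝓝 0, ∏ i, expScale (fun z => u z • Pi.single o 1) z i = ψ (∏ i, z i)) :
    ∀ᶠ z in 𝓝 0, (fderiv ℂ (expScale fun z => u z • Pi.single o 1) z).det =
      deriv ψ (∏ i, z i) := by
  have : Nonempty ι := ⟨o⟩
  have hdet : (fun z => (fderiv ℂ (expScale fun z => u z • Pi.single o 1) z).det) =ᶠ[𝓝 0]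
      fun z => Complex.exp (u z) * (1 + diagDeriv (Pi.single o 1) u z) :=
    hu.eventually_analyticAt.mono fun z hz => by
      simp [det_fderiv_expScale_smul _ hz.differentiableAt]
  refine hdet.trans (eventuallyEq_of_prod_coord_ne_zero
    (hu.cexp.mul (analyticAt_const.add (analyticAt_diagDeriv hu _)))
    (analyticAt_comp_prod_coord hψ.deriv) ?_)
  filter_upwards [eventuallyEq_diagDeriv h (Pi.single o 1), hu.eventually_analyticAt,
    tendsto_prod_coord.eventually hψ.eventually_analyticAt] with z hz huz hψz hz0
  rw [diagDeriv_comp_expScale_smul (analyticAt_prod_coord _).differentiableAt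
    huz.differentiableAt, diagDeriv_prod_coord, prod_expScale_smul,
    diagDeriv_comp_prod_coord hψz.differentiableAt] at hz
  refine mul_right_cancel₀ hz0 ?_
  simp only [Finset.sum_pi_single', Finset.mem_univ, if_true, mul_one, one_mul] at hz
  linear_combination hz

end FunctionsOfProduct

section Primitives

theorem exists_eventuallyEq_exp {E : Type*} [NormedAddCommGroup E] [NormedSpace ℂ E] {u : E → ℂ}
    {x : E} (hu : AnalyticAt ℂ u x) (hx : u x ≠ 0) :
    ∃ v : E → ℂ, AnalyticAt ℂ v x ∧ (fun z => Complex.exp (v z)) =ᶠ[𝓝 x] u := by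
  refine ⟨fun z => Complex.log (u x) + Complex.log (u z / u x),
    analyticAt_const.add (hu.div_const.clog ?_), ?_⟩
  · rw [div_self hx]
    exact Complex.one_mem_slitPlane
  · filter_upwards [hu.continuousAt.eventually_ne hx] with z hz
    rw [Complex.exp_add, Complex.exp_log hx, Complex.exp_log (div_ne_zero hz hx),
      mul_div_cancel₀ _ hx]

theorem exists_primitive_analyticAt {j : ℂ → ℂ} (hj : AnalyticAt ℂ j 0) :
    ∃ ψ : ℂ → ℂ, AnalyticAt ℂ ψ 0 ∧ ψ 0 = 0 ∧ ∀ᶠ t in 𝓝 0, HasDerivAt ψ (j t) t := by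
  obtain ⟨r, hr, hball⟩ := Metric.eventually_nhds_iff_ball.1 hj.eventually_analyticAt
  obtain ⟨g, hg⟩ := DifferentiableOn.isExactOn_ball (f := j) (c := 0) (r := r)
    fun t ht => (hball t ht).differentiableAt.differentiableWithinAt
  have hderiv : ∀ t ∈ Metric.ball 0 r, HasDerivAt (fun t => g t - g 0) (j t) t := fun t ht =>
    (hg t ht).sub_const _
  exact ⟨fun t => g t - g 0, DifferentiableOn.analyticAt
    (fun t ht => (hderiv t ht).differentiableAt.differentiableWithinAt) (Metric.ball_mem_nhds 0 hr),
    sub_self _, eventually_of_mem (Metric.ball_mem_nhds 0 hr) hderiv⟩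

theorem exists_hasDerivAt_exp_mul {j : ℂ → ℂ} (hj : AnalyticAt ℂ j 0) (hj0 : j 0 ≠ 0) :
    ∃ l : ℂ → ℂ, AnalyticAt ℂ l 0 ∧
      ∀ᶠ t in 𝓝 0, HasDerivAt (fun t => Complex.exp (l t) * t) (j t) t := by
  obtain ⟨ψ, ⟨q, hq⟩, hψ0, hψ'⟩ := exists_primitive_analyticAt hj
  have hslope0 : dslope ψ 0 0 = j 0 := by rw [dslope_same, hψ'.self_of_nhds.deriv]
  obtain ⟨l, hl, hexp⟩ := exists_eventuallyEq_exp (u := dslope ψ 0) (x := 0)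
    ⟨_, hq.has_fpower_series_dslope_fslope⟩ (by rwa [hslope0])
  refine ⟨l, hl, ?_⟩
  filter_upwards [hexp.eventually_nhds, hψ'] with t ht hψt
  refine hψt.congr_of_eventuallyEq ?_
  filter_upwards [ht] with s hs
  simpa [hs, hψ0, mul_comm] using sub_smul_dslope ψ 0 s

end Primitives

section FiberedJacobians

theorem det_fderiv_comp {𝕜 E : Type*} [NontriviallyNormedField 𝕜] [NormedAddCommGroup E]
    [NormedSpace 𝕜 E] {φ χ : E → E} {z : E} (hφ : DifferentiableAt 𝕜 φ (χ z))
    (hχ : DifferentiableAt 𝕜 χ z) :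
    (fderiv 𝕜 (fun z => φ (χ z)) z).det = (fderiv 𝕜 φ (χ z)).det * (fderiv 𝕜 χ z).det := by
  rw [fderiv_fun_comp z hφ hχ]
  exact LinearMap.det_comp _ _

variable {ι : Type*} [Fintype ι] {c : ι → ℂ} {J : (ι → ℂ) → ℂ}

theorem exists_eventuallyEq_circleMean_mul (hc : ∀ i, ∃ m : ℤ, c i = m)
    (hJ : AnalyticAt ℂ J 0) (hJ0 : J 0 ≠ 0) :
    ∃ u : (ι → ℂ) → ℂ, AnalyticAt ℂ u 0 ∧
      ∀ᶠ z in 𝓝 0, J z = circleMean c J z * (1 + diagDeriv c u z) := by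
  obtain ⟨B, hB, hJB⟩ := exists_eventuallyEq_circleMean_add_diagDeriv hc hJ
  have hmean := analyticAt_circleMean hc hJ
  have hmean0 : circleMean c J 0 ≠ 0 := by rwa [circleMean_zero]
  have hu : AnalyticAt ℂ (fun z => B z / circleMean c J z) 0 := hB.div hmean hmean0
  have hquot : B =ᶠ[𝓝 0] fun z => circleMean c J z * (B z / circleMean c J z) := by
    filter_upwards [hmean.continuousAt.eventually_ne hmean0] with z hz
    rw [mul_div_cancel₀ _ hz]
  refine ⟨_, hu, ?_⟩
  filter_upwards [hJB, eventuallyEq_diagDeriv hquot c, diagDeriv_circleMean_self hc hJ,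
    hmean.eventually_analyticAt, hu.eventually_analyticAt] with z hJz hBz hinv hmz huz
  rw [diagDeriv_mul hmz.differentiableAt huz.differentiableAt, hinv, Pi.zero_apply, zero_mul,
    add_zero] at hBz
  rw [mul_one_add, ← hBz, hJz.symm]

/-- The density `J` is the Jacobian determinant of a germ fixing `0` and mapping the fibers of
`∏ i, z i` to each other. -/
def IsFiberedJacobian (J : (ι → ℂ) → ℂ) : Prop :=
  ∃ (η : (ι → ℂ) → ι → ℂ) (ψ : ℂ → ℂ), AnalyticAt ℂ η 0 ∧ η 0 = 0 ∧ IsGermAuto ψ ∧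
    (∀ᶠ z in 𝓝 0, (fderiv ℂ η z).det = J z) ∧ ∀ᶠ z in 𝓝 0, ∏ i, η z i = ψ (∏ i, z i)

theorem IsFiberedJacobian.of_circleMean (hmean : IsFiberedJacobian (circleMean c J))
    (hc : ∀ i, ∃ m : ℤ, c i = m) (hc0 : ∑ i, c i = 0) (hJ : AnalyticAt ℂ J 0) (hJ0 : J 0 ≠ 0) :
    IsFiberedJacobian J := by
  obtain ⟨η, ψ, hη, hη0, hψ, hdet, hprod⟩ := hmean
  obtain ⟨u, hu, hJu⟩ := exists_eventuallyEq_circleMean_mul hc hJ hJ0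
  let χ : (ι → ℂ) → ι → ℂ := expScale fun z => u z • c
  have hχ : AnalyticAt ℂ χ 0 := analyticAt_expScale (hu.smul analyticAt_const)
  have hχ0 : Tendsto χ (𝓝 0) (𝓝 0) := by
    simpa only [χ, expScale_zero] using hχ.continuousAt.tendsto
  refine ⟨fun z => η (χ z), ψ, AnalyticAt.fun_comp_of_eq hη hχ (expScale_zero _), ?_, hψ, ?_, ?_⟩
  · simp only [χ, expScale_zero, hη0]
  · filter_upwards [hχ0.eventually hη.eventually_analyticAt, hχ0.eventually hdet,
      hχ.eventually_analyticAt, hu.eventually_analyticAt, hJu,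
      eventually_apply_diagExp_smul_eq (analyticAt_circleMean hc hJ)
        (diagDeriv_circleMean_self hc hJ) hu.continuousAt] with z hηz hdetz hχz huz hJz hinv
    rw [det_fderiv_comp hηz.differentiableAt hχz.differentiableAt, hdetz,
      det_fderiv_expScale_smul c huz.differentiableAt, hc0, mul_zero, Complex.exp_zero, one_mul,
      hJz, ← hinv]
    rfl
  · filter_upwards [hχ0.eventually hprod] with z hz
    rw [hz, prod_expScale_smul, hc0, mul_zero, Complex.exp_zero, one_mul]

theorem isFiberedJacobian_of_diagDeriv_coordExchange [DecidableEq ι] (o : ι)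
    (hJ : AnalyticAt ℂ J 0) (hJ0 : J 0 ≠ 0)
    (hinv : ∀ k, diagDeriv (coordExchange o k) J =ᶠ[𝓝 0] 0) :
    IsFiberedJacobian J := by
  have : Nonempty ι := ⟨o⟩
  obtain ⟨j, hj, hJj⟩ := exists_eventuallyEq_comp_prod_coord o hJ hinv
  have hj0 : j 0 ≠ 0 := by simpa [hJj.self_of_nhds] using hJ0
  obtain ⟨l, hl, hderiv⟩ := exists_hasDerivAt_exp_mul hj hj0
  let ψ : ℂ → ℂ := fun t => Complex.exp (l t) * t
  have hψ : AnalyticAt ℂ ψ 0 := hl.cexp.mul analyticAt_id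
  have hu : AnalyticAt ℂ (fun z : ι → ℂ => l (∏ i, z i)) 0 := analyticAt_comp_prod_coord hl
  have hprod : ∀ z, ∏ i, expScale (fun z => l (∏ i, z i) • Pi.single o 1) z i =
      ψ (∏ i, z i) := fun z => by simp [prod_expScale_smul, ψ]
  refine ⟨expScale fun z => l (∏ i, z i) • Pi.single o 1, ψ,
    analyticAt_expScale (hu.smul analyticAt_const), expScale_zero _, ⟨hψ, mul_zero _, ?_⟩, ?_,
    Eventually.of_forall hprod⟩
  · rwa [hderiv.self_of_nhds.deriv]
  · filter_upwards [hJj, tendsto_prod_coord.eventually hderiv,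
      eventually_det_fderiv_expScale_single o hu hψ (Eventually.of_forall hprod)]
      with z hJz hderivz hdet
    rw [hdet, hderivz.deriv, hJz]

theorem isFiberedJacobian_of_forall_notMem [DecidableEq ι] (o : ι) (S : Finset ι)
    {J : (ι → ℂ) → ℂ} (hJ : AnalyticAt ℂ J 0) (hJ0 : J 0 ≠ 0)
    (hinv : ∀ k ∉ S, diagDeriv (coordExchange o k) J =ᶠ[𝓝 0] 0) : IsFiberedJacobian J := by
  induction S using Finset.induction_on generalizing J with
  | empty => exact isFiberedJacobian_of_diagDeriv_coordExchange o hJ hJ0 fun k => hinv k (by simp)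
  | insert k S _ ih =>
    have hc := coordExchange_integral o k
    refine .of_circleMean (c := coordExchange o k) ?_ hc (sum_coordExchange o k) hJ hJ0
    refine ih (analyticAt_circleMean hc hJ) (by rwa [circleMean_zero]) fun j hj => ?_
    rcases eq_or_ne j k with rfl | hjk
    · exact diagDeriv_circleMean_self hc hJ
    · exact diagDeriv_circleMean_eq_zero hc hJ (hinv j (by simp [hjk, hj]))

theorem isFiberedJacobian [Nonempty ι] (hJ : AnalyticAt ℂ J 0) (hJ0 : J 0 ≠ 0) :
    IsFiberedJacobian J := by
  classical
  exact isFiberedJacobian_of_forall_notMem (Classical.arbitrary ι) Finset.univ hJ hJ0 (by simp)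

end FiberedJacobians

section Germs

variable {n : ℕ} {φ χ φ' χ' : (Fin n → ℂ) → Fin n → ℂ}

namespace IsGermBiholo

theorem analyticAt (h : IsGermBiholo φ χ) : AnalyticAt ℂ φ 0 := h.1

theorem map_zero (h : IsGermBiholo φ χ) : φ 0 = 0 := h.2.2.1

theorem symm (h : IsGermBiholo φ χ) : IsGermBiholo χ φ :=
  ⟨h.2.1, h.1, h.2.2.2.1, h.2.2.1, h.2.2.2.2.2, h.2.2.2.2.1⟩

theorem eventually_left_inverse (h : IsGermBiholo φ χ) : ∀ᶠ z in 𝓝 0, χ (φ z) = z :=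
  h.2.2.2.2.1

theorem tendsto (h : IsGermBiholo φ χ) : Tendsto φ (𝓝 0) (𝓝 0) := by
  simpa only [h.map_zero] using h.analyticAt.continuousAt.tendsto

theorem comp (h : IsGermBiholo φ χ) (h' : IsGermBiholo φ' χ') :
    IsGermBiholo (fun z => φ (φ' z)) fun z => χ' (χ z) := by
  refine ⟨h.analyticAt.fun_comp_of_eq h'.analyticAt h'.map_zero,
    h'.symm.analyticAt.fun_comp_of_eq h.symm.analyticAt h.symm.map_zero,
    by simp only [h'.map_zero, h.map_zero],
    by simp only [h.symm.map_zero, h'.symm.map_zero], ?_, ?_⟩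
  · filter_upwards [h'.eventually_left_inverse, h'.tendsto.eventually h.eventually_left_inverse]
      with z hz hφz
    rw [hφz, hz]
  · filter_upwards [h.symm.eventually_left_inverse,
      h.symm.tendsto.eventually h'.symm.eventually_left_inverse] with z hz hφz
    rw [hφz, hz]

theorem eventually_det_mul_det (h : IsGermBiholo φ χ) :
    ∀ᶠ z in 𝓝 0, (fderiv ℂ φ (χ z)).det * (fderiv ℂ χ z).det = 1 := by
  filter_upwards [h.symm.tendsto.eventually h.analyticAt.eventually_analyticAt,
    h.symm.analyticAt.eventually_analyticAt, h.symm.eventually_left_inverse.eventually_nhds]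
    with z hφz hχz hid
  have hfd : fderiv ℂ (fun z => φ (χ z)) z = ContinuousLinearMap.id ℂ _ :=
    (EventuallyEq.fderiv_eq (f := id) hid).trans fderiv_id
  rw [← det_fderiv_comp hφz.differentiableAt hχz.differentiableAt, hfd]
  exact LinearMap.det_id

theorem det_fderiv_zero_ne_zero (h : IsGermBiholo φ χ) : (fderiv ℂ φ 0).det ≠ 0 := by
  have hdet := h.eventually_det_mul_det.self_of_nhds
  rw [h.symm.map_zero] at hdet
  exact left_ne_zero_of_mul_eq_one hdet

end IsGermBiholo

theorem exists_isGermBiholo (hφ : AnalyticAt ℂ φ 0) (hφ0 : φ 0 = 0)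
    (hdet : (fderiv ℂ φ 0).det ≠ 0) : ∃ χ, IsGermBiholo φ χ := by
  let e := (fderiv ℂ φ 0).toContinuousLinearEquivOfDetNeZero hdet
  have hstrict : HasStrictFDerivAt φ (e : (Fin n → ℂ) →L[ℂ] Fin n → ℂ) 0 := hφ.hasStrictFDerivAt
  have hinv := (hφ.contDiffAt (n := ⊤)).to_localInverse hstrict.hasFDerivAt (by simp)
  have hinv0 := hstrict.localInverse_apply_image
  have hright := hstrict.eventually_right_inverse
  rw [hφ0] at hinv hinv0 hright
  exact ⟨_, hφ, hinv.analyticAt, hφ0, hinv0, hstrict.eventually_left_inverse, hright⟩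

theorem IsGermAuto.tendsto {ψ : ℂ → ℂ} (hψ : IsGermAuto ψ) : Tendsto ψ (𝓝 0) (𝓝 0) := by
  simpa only [hψ.2.1] using hψ.1.continuousAt.tendsto

theorem IsGermAuto.exists_inverse {ψ : ℂ → ℂ} (hψ : IsGermAuto ψ) :
    ∃ ρ, IsGermAuto ρ ∧ (∀ᶠ t in 𝓝 0, ρ (ψ t) = t) ∧ ∀ᶠ t in 𝓝 0, ψ (ρ t) = t := by
  obtain ⟨han, hψ0, hderiv⟩ := hψ
  have hstrict := han.hasStrictDerivAt
  have hequiv := hstrict.hasStrictFDerivAt_equiv hderiv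
  have hinv := han.analyticAt_localInverse hderiv
  have hinv' := hstrict.to_localInverse hderiv
  have hinv0 := hequiv.localInverse_apply_image
  have hright := hequiv.eventually_right_inverse
  rw [hψ0] at hinv hinv' hinv0 hright
  refine ⟨_, ⟨hinv, hinv0, ?_⟩, hequiv.eventually_left_inverse, hright⟩
  rw [hinv'.hasDerivAt.deriv]
  exact inv_ne_zero hderiv

theorem IsVolumePreserving.comp {Φ Φ' : (Fin n → ℂ) → Fin n → ℂ} (hvol : IsVolumePreserving Φ)
    (hvol' : IsVolumePreserving Φ') (hΦ : AnalyticAt ℂ Φ 0) (hΦ' : AnalyticAt ℂ Φ' 0)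
    (hΦ'0 : Tendsto Φ' (𝓝 0) (𝓝 0)) : IsVolumePreserving fun z => Φ (Φ' z) := by
  filter_upwards [hvol', hΦ'0.eventually hvol, hΦ'.eventually_analyticAt,
    hΦ'0.eventually hΦ.eventually_analyticAt] with z hz hz' hΦ'z hΦz
  rw [← ContinuousLinearMap.det, det_fderiv_comp hΦz.differentiableAt hΦ'z.differentiableAt,
    ContinuousLinearMap.det, ContinuousLinearMap.det, hz, hz', one_mul]

theorem IsGermBiholo.isVolumePreserving_symm {Φ Φι : (Fin n → ℂ) → Fin n → ℂ}
    (h : IsGermBiholo Φ Φι) (hvol : IsVolumePreserving Φ) : IsVolumePreserving Φι := by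
  filter_upwards [h.eventually_det_mul_det, h.symm.tendsto.eventually hvol] with z hz hΦz
  rwa [ContinuousLinearMap.det, hΦz, one_mul] at hz

theorem analyticAt_det_fderiv {ι : Type*} [Fintype ι] {φ : (ι → ℂ) → ι → ℂ} {x : ι → ℂ}
    (hφ : AnalyticAt ℂ φ x) : AnalyticAt ℂ (fun z => (fderiv ℂ φ z).det) x := by
  classical
  have hmatrix : ∀ z, (fderiv ℂ φ z).det =
      (Matrix.of fun i j => fderiv ℂ φ z (Pi.single j 1) i).det := fun z =>
    (LinearMap.det_toMatrix' _).symm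
  simp only [hmatrix, Matrix.det_apply', Matrix.of_apply]
  refine Finset.analyticAt_fun_sum _ fun τ _ =>
    analyticAt_const.mul (Finset.analyticAt_fun_prod _ fun i _ => ?_)
  exact analyticAt_pi_iff.1 ((ContinuousLinearMap.apply ℂ (ι → ℂ)
    (Pi.single i (1 : ℂ) : ι → ℂ)).analyticAt _ |>.fun_comp hφ.fderiv) (τ i)

end Germs

section Existence

variable {n : ℕ}

theorem exists_isVolumePreserving_comp_eq [NeZero n] {f : (Fin n → ℂ) → ℂ}
    {σ χ : (Fin n → ℂ) → Fin n → ℂ} (hσ : IsGermBiholo σ χ)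
    (hf : ∀ᶠ z in 𝓝 0, f (χ z) = ∏ i, z i) :
    ∃ Φ Φι : (Fin n → ℂ) → Fin n → ℂ, IsGermBiholo Φ Φι ∧ IsVolumePreserving Φ ∧
      ∃ Ψ : ℂ → ℂ, IsGermAuto Ψ ∧ ∀ᶠ z in 𝓝 0, f (Φ z) = Ψ (∏ i, z i) := by
  have hdet0 := hσ.symm.det_fderiv_zero_ne_zero
  obtain ⟨η, ψ, hη, hη0, hψ, hdet, hprod⟩ :=
    isFiberedJacobian (analyticAt_det_fderiv hσ.symm.analyticAt) hdet0
  obtain ⟨ζ, hηζ⟩ := exists_isGermBiholo hη hη0 (hdet.self_of_nhds.trans_ne hdet0)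
  obtain ⟨Ψ, hΨ, hleft, -⟩ := hψ.exists_inverse
  have hζ := hηζ.symm
  refine ⟨_, _, hσ.symm.comp hζ, ?_, Ψ, hΨ, ?_⟩
  · filter_upwards [hηζ.eventually_det_mul_det, hζ.tendsto.eventually hdet,
      hζ.tendsto.eventually hσ.symm.analyticAt.eventually_analyticAt,
      hζ.analyticAt.eventually_analyticAt] with z hinv hdetz hχz hζz
    rw [← ContinuousLinearMap.det, det_fderiv_comp hχz.differentiableAt hζz.differentiableAt,
      ← hdetz, hinv]
  · filter_upwards [hζ.tendsto.eventually hf, hζ.tendsto.eventually hprod,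
      hζ.eventually_left_inverse,
      hζ.tendsto.eventually (tendsto_prod_coord.eventually hleft)] with z hfz hprodz hηz hΨz
    rw [hfz, ← hΨz, ← hprodz, hηz]

end Existence

section Divisibility

theorem eventuallyEq_zero_or_eventuallyEq_zero_of_mul {E : Type*} [NormedAddCommGroup E]
    [NormedSpace ℂ E] {f g : E → ℂ} {x : E} (hf : AnalyticAt ℂ f x) (hg : AnalyticAt ℂ g x)
    (h : ∀ᶠ z in 𝓝 x, f z * g z = 0) : f =ᶠ[𝓝 x] 0 ∨ g =ᶠ[𝓝 x] 0 := by
  refine or_iff_not_imp_left.2 fun hf0 => ?_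
  obtain ⟨r, hr, hball⟩ := Metric.eventually_nhds_iff_ball.1
    (h.and (hf.eventually_analyticAt.and hg.eventually_analyticAt))
  obtain ⟨y, hfy, hy⟩ := (not_eventually.1 hf0).and_eventually (Metric.ball_mem_nhds x hr) |>.exists
  have hgy : g =ᶠ[𝓝 y] 0 := by
    filter_upwards [(hball y hy).2.1.continuousAt.eventually_ne hfy,
      Metric.isOpen_ball.mem_nhds hy] with z hfz hz
    exact (mul_eq_zero.1 (hball z hz).1).resolve_left hfz
  have hg0 : Set.EqOn g 0 (Metric.ball x r) :=
    AnalyticOnNhd.eqOn_zero_of_preconnected_of_eventuallyEq_zero (fun z hz => (hball z hz).2.2)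
      (Metric.isConnected_ball hr).isPreconnected hy hgy
  exact hg0.eventuallyEq_of_mem (Metric.ball_mem_nhds x hr)

theorem exists_eventuallyEq_zero_of_prod {E κ : Type*} [NormedAddCommGroup E] [NormedSpace ℂ E]
    {G : κ → E → ℂ} {x : E} (s : Finset κ) (hG : ∀ k, AnalyticAt ℂ (G k) x)
    (h : ∀ᶠ z in 𝓝 x, ∏ k ∈ s, G k z = 0) : ∃ k ∈ s, G k =ᶠ[𝓝 x] 0 := by
  classical
  induction s using Finset.induction_on with
  | empty => simpa using h.self_of_nhds
  | insert a s ha ih =>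
    simp only [Finset.prod_insert ha] at h
    rcases eventuallyEq_zero_or_eventuallyEq_zero_of_mul (hG a)
      (Finset.analyticAt_fun_prod s fun k _ => hG k) h with ha0 | hs0
    · exact ⟨a, Finset.mem_insert_self a s, ha0⟩
    · obtain ⟨k, hk, hk0⟩ := ih hs0
      exact ⟨k, Finset.mem_insert_of_mem hk, hk0⟩

variable {ι : Type*}

theorem fderiv_zero_apply_of_eventuallyEq_coord_mul [Finite ι] {χ : (ι → ℂ) → ι → ℂ}
    {u : (ι → ℂ) → ℂ} {i j : ι} (hχ : DifferentiableAt ℂ χ 0) (hu : DifferentiableAt ℂ u 0)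
    (h : ∀ᶠ z in 𝓝 0, χ z i = z j * u z) (y : ι → ℂ) : fderiv ℂ χ 0 y i = y j * u 0 := by
  cases nonempty_fintype ι
  have hmul : HasFDerivAt (fun z : ι → ℂ => z j * u z) _ 0 :=
    (ContinuousLinearMap.proj (R := ℂ) (φ := fun _ : ι => ℂ) j).hasFDerivAt.mul hu.hasFDerivAt
  have heq := (hasFDerivAt_pi'.1 hχ.hasFDerivAt i).unique (hmul.congr_of_eventuallyEq h)
  simpa [mul_comm] using DFunLike.congr_fun heq y

variable [Fintype ι] [DecidableEq ι]

/-- Multiplication of the `j`-th coordinate by `s`; for `s` from `0` to `1` this moves a point along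
a segment from its projection to the hyperplane `z j = 0` back to itself. -/
noncomputable def coordRamp (j : ι) (s : ℝ) : (ι → ℂ) →L[ℂ] (ι → ℂ) :=
  ContinuousLinearMap.mul ℂ (ι → ℂ) (Function.update 1 j (s : ℂ))

theorem coordRamp_apply (j : ι) (s : ℝ) (z : ι → ℂ) :
    coordRamp j s z = Function.update z j (s * z j) := by
  ext i
  rcases eq_or_ne i j with rfl | hi
  · simp [coordRamp]
  · simp [coordRamp, hi]

theorem continuous_coordRamp (j : ι) : Continuous (coordRamp j) :=
  (ContinuousLinearMap.mul ℂ (ι → ℂ)).continuous.comp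
    (continuous_const.update j Complex.continuous_ofReal)

theorem norm_coordRamp_le_one (j : ι) {s : ℝ} (hs : s ∈ Set.uIcc (0 : ℝ) 1) :
    ‖coordRamp j s‖ ≤ 1 := by
  rw [Set.uIcc_of_le zero_le_one] at hs
  refine (ContinuousLinearMap.opNorm_mul_apply_le ℂ _ _).trans <|
    (pi_norm_le_iff_of_nonneg zero_le_one).2 fun i => ?_
  rcases eq_or_ne i j with rfl | hi
  · simpa [abs_of_nonneg hs.1] using hs.2
  · simp [hi]

theorem hasDerivAt_comp_coordRamp {g : (ι → ℂ) → ℂ} {j : ι} {s : ℝ} {z : ι → ℂ}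
    (hg : DifferentiableAt ℂ g (coordRamp j s z)) :
    HasDerivAt (fun s : ℝ => g (coordRamp j s z))
      (z j * fderiv ℂ g (coordRamp j s z) (Pi.single j 1)) s := by
  have hscale : HasDerivAt (fun t : ℂ => t * z j) (z j) s := by
    simpa using (hasDerivAt_id (s : ℂ)).mul_const (z j)
  have hcurve : HasDerivAt (fun t : ℂ => Function.update z j (t * z j))
      (z j • Pi.single j (1 : ℂ)) s :=
    (hasDerivAt_update z j _).scomp (s : ℂ) hscale
  simp only [coordRamp_apply] at hg ⊢
  exact ((hg.hasFDerivAt.comp_hasDerivAt (s : ℂ) hcurve).comp_ofReal).congr_deriv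
    (map_smul _ _ _)

/-- The quotient is Hadamard's `∫ ∂g/∂z_j` along the segment from `z_j = 0`. -/
theorem exists_eventuallyEq_coord_mul (j : ι) {g : (ι → ℂ) → ℂ} (hg : AnalyticAt ℂ g 0)
    (h0 : ∀ᶠ z in 𝓝 0, g (Function.update z j 0) = 0) :
    ∃ u : (ι → ℂ) → ℂ, AnalyticAt ℂ u 0 ∧ ∀ᶠ z in 𝓝 0, g z = z j * u z := by
  let g' : (ι → ℂ) → ℂ := fun z => fderiv ℂ g z (Pi.single j 1)
  have hg' : AnalyticAt ℂ g' 0 :=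
    ((ContinuousLinearMap.apply ℂ ℂ (Pi.single j (1 : ℂ) : ι → ℂ)).analyticAt _).comp hg.fderiv
  refine ⟨orbitIntegral 0 1 (fun _ => 1) (coordRamp j) g', analyticAt_orbitIntegral hg'
    continuous_const (continuous_coordRamp j) fun s => norm_coordRamp_le_one j, ?_⟩
  filter_upwards [h0, eventually_forall_contraction
    (hg.eventually_analyticAt.and hg'.eventually_analyticAt)] with z hz hana
  have hftc := intervalIntegral.integral_eq_sub_of_hasDerivAt (a := 0) (b := 1)
    (fun s hs => hasDerivAt_comp_coordRamp
      (hana _ (norm_coordRamp_le_one j hs)).1.differentiableAt)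
    (continuousOn_orbitIntegrand (w := fun _ => z j) continuous_const (continuous_coordRamp j)
      fun s hs => (hana _ (norm_coordRamp_le_one j hs)).2.continuousAt).intervalIntegrable
  rw [intervalIntegral.integral_const_mul] at hftc
  simpa [coordRamp_apply, hz, orbitIntegral, g'] using hftc.symm

theorem exists_coord_eventuallyEq_coord_mul (j : ι) {χ : (ι → ℂ) → ι → ℂ} (hχ : AnalyticAt ℂ χ 0)
    (hj : ∀ᶠ z in 𝓝 0, ∏ i, χ (Function.update z j 0) i = 0) :
    ∃ (i : ι) (u : (ι → ℂ) → ℂ), AnalyticAt ℂ u 0 ∧ ∀ᶠ z in 𝓝 0, χ z i = z j * u z := by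
  have hrestrict : AnalyticAt ℂ (fun z => χ (coordRamp j 0 z)) 0 :=
    hχ.fun_comp_of_eq ((coordRamp j 0).analyticAt 0) (map_zero _)
  simp only [coordRamp_apply, Complex.ofReal_zero, zero_mul] at hrestrict
  obtain ⟨i, -, hi⟩ :=
    exists_eventuallyEq_zero_of_prod Finset.univ (analyticAt_pi_iff.1 hrestrict) hj
  exact ⟨i, exists_eventuallyEq_coord_mul j (analyticAt_pi_iff.1 hχ i) hi⟩

theorem exists_perm_eventually_eq_expScale {χ : (ι → ℂ) → ι → ℂ} (hχ : AnalyticAt ℂ χ 0)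
    (hdet : (fderiv ℂ χ 0).det ≠ 0)
    (hprod : ∀ j, ∀ᶠ z in 𝓝 0, ∏ i, χ (Function.update z j 0) i = 0) :
    ∃ (τ : Equiv.Perm ι) (v : (ι → ℂ) → ι → ℂ), AnalyticAt ℂ v 0 ∧
      ∀ᶠ z in 𝓝 0, ∀ j, χ z (τ j) = expScale v z j := by
  choose τ u hu hχu using fun j => exists_coord_eventuallyEq_coord_mul j hχ (hprod j)
  have hfd : ∀ j y, fderiv ℂ χ 0 y (τ j) = y j * u j 0 := fun j =>
    fderiv_zero_apply_of_eventuallyEq_coord_mul hχ.differentiableAt (hu j).differentiableAt (hχu j)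
  have hu0 : ∀ j, u j 0 ≠ 0 := fun j hj => by
    obtain ⟨y, hy⟩ := ((fderiv ℂ χ 0).toContinuousLinearEquivOfDetNeZero hdet).surjective 1
    have hyj : fderiv ℂ χ 0 y (τ j) = 1 := congrFun hy (τ j)
    simp [hfd, hj] at hyj
  have hτ : Function.Injective τ := fun j j' hjj' => by
    by_contra hne
    have heq := (hfd j (Pi.single j 1)).symm.trans (hjj' ▸ hfd j' (Pi.single j 1))
    simp [Ne.symm hne, hu0] at heq
  choose v hv hexp using fun j => exists_eventuallyEq_exp (hu j) (hu0 j)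
  refine ⟨Equiv.ofBijective τ (Finite.injective_iff_bijective.1 hτ), fun z j => v j z,
    analyticAt_pi_iff.2 hv, ?_⟩
  filter_upwards [eventually_all.2 hexp, eventually_all.2 hχu] with z hexpz hχz j
  rw [Equiv.ofBijective_apply, hχz, ← hexpz, mul_comm]
  rfl

end Divisibility

section FlowExactness

variable {ι κ : Type*} [Fintype ι] {c : κ → ι → ℂ} {S : Finset κ} {J J' : (ι → ℂ) → ℂ}

/-- Near `0`, `J` is a sum of derivatives of analytic germs along the diagonal fields with weights
`c k`, `k ∈ S`. For integral weights the average of such a sum over the torus generated by these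
fields vanishes. -/
def IsFlowExact (c : κ → ι → ℂ) (S : Finset κ) (J : (ι → ℂ) → ℂ) : Prop :=
  ∃ K : κ → (ι → ℂ) → ℂ, (∀ k, AnalyticAt ℂ (K k) 0) ∧
    ∀ᶠ z in 𝓝 0, J z = ∑ k ∈ S, diagDeriv (c k) (K k) z

theorem IsFlowExact.congr (h : IsFlowExact c S J) (hJ : J' =ᶠ[𝓝 0] J) : IsFlowExact c S J' := by
  obtain ⟨K, hK, hJK⟩ := h
  exact ⟨K, hK, EventuallyEq.trans hJ hJK⟩

theorem IsFlowExact.add (h : IsFlowExact c S J) (h' : IsFlowExact c S J') :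
    IsFlowExact c S fun z => J z + J' z := by
  obtain ⟨K, hK, hJ⟩ := h
  obtain ⟨K', hK', hJ'⟩ := h'
  refine ⟨fun k z => K k z + K' k z, fun k => (hK k).add (hK' k), ?_⟩
  filter_upwards [hJ, hJ', (eventually_all_finset S).2 fun k _ => (hK k).eventually_analyticAt,
    (eventually_all_finset S).2 fun k _ => (hK' k).eventually_analyticAt] with z hz hz' hKz hKz'
  rw [hz, hz', ← Finset.sum_add_distrib]
  exact Finset.sum_congr rfl fun k hk =>
    (diagDeriv_add (hKz k hk).differentiableAt (hKz' k hk).differentiableAt).symm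

theorem IsFlowExact.mono {S' : Finset κ} (h : IsFlowExact c S J) (hS : S ⊆ S') :
    IsFlowExact c S' J := by
  classical
  obtain ⟨K, hK, hJ⟩ := h
  refine ⟨fun k => if k ∈ S then K k else 0, fun k => ?_, ?_⟩
  · by_cases hk : k ∈ S
    · simpa only [if_pos hk] using hK k
    · simp only [if_neg hk]
      exact analyticAt_const
  · filter_upwards [hJ] with z hz
    rw [hz, ← Finset.sum_subset hS fun k _ hk => by simp [hk, diagDeriv]]
    exact Finset.sum_congr rfl fun k hk => by rw [if_pos hk]

theorem isFlowExact_zero : IsFlowExact c S 0 :=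
  ⟨0, fun _ => analyticAt_const, Eventually.of_forall fun z => by simp [diagDeriv]⟩

theorem isFlowExact_diagDeriv {k : κ} (hk : k ∈ S) (hJ : AnalyticAt ℂ J 0) :
    IsFlowExact c S (diagDeriv (c k) J) :=
  IsFlowExact.mono ⟨fun _ => J, fun _ => hJ, Eventually.of_forall fun z => by
    rw [Finset.sum_singleton]⟩ (Finset.singleton_subset_iff.2 hk)

/-- Averaging over the circle with weights `c k` fixes functions of the product and kills the
derivatives along `c k`, so it removes one element from `S`. -/
theorem eventually_comp_prod_coord_eq_zero_of_isFlowExact {h : ℂ → ℂ}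
    (hc : ∀ k i, ∃ m : ℤ, c k i = m) (hc0 : ∀ k, ∑ i, c k i = 0)
    (hexact : IsFlowExact c S fun z => h (∏ i, z i)) : ∀ᶠ z : ι → ℂ in 𝓝 0, h (∏ i, z i) = 0 := by
  classical
  induction S using Finset.induction_on with
  | empty =>
    obtain ⟨K, -, hK⟩ := hexact
    simpa using hK
  | insert l S hl ih =>
    obtain ⟨K, hK, hhK⟩ := hexact
    refine ih ⟨fun k => circleMean (c l) (K k), fun k => analyticAt_circleMean (hc l) (hK k), ?_⟩
    have hmean := (eventuallyEq_circleMean (hc l) hhK).trans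
      (eventually_circleMean_sum (hc l) (insert l S) fun k => analyticAt_diagDeriv (hK k) (c k))
    rw [circleMean_comp_prod (hc0 l)] at hmean
    filter_upwards [hmean, circleMean_diagDeriv_self (hc l) (hK l), (eventually_all_finset S).2
      fun k _ => diagDeriv_circleMean (hc l) (hK k) (c k)] with z hz hself hcomm
    rw [hz, Finset.sum_insert hl, hself, Pi.zero_apply, zero_add]
    exact Finset.sum_congr rfl fun k hk => (hcomm k hk).symm

/-- Write `J = A + D B`, where `D` is the derivative along `a` and `A` the circle mean of `J`, and
let `T` be the map `z ↦ exp (u z • a) z`. Since `A` is constant along the orbits,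
`(J ∘ T) det T' - J = D (A u + B ∘ T - B)`. -/
theorem exists_comp_expScale_mul_det_sub_eq_diagDeriv {a : ι → ℂ} {u : (ι → ℂ) → ℂ}
    (ha : ∀ i, ∃ m : ℤ, a i = m) (ha0 : ∑ i, a i = 0) (hJ : AnalyticAt ℂ J 0)
    (hu : AnalyticAt ℂ u 0) :
    ∃ K : (ι → ℂ) → ℂ, AnalyticAt ℂ K 0 ∧ ∀ᶠ z in 𝓝 0,
      J (expScale (fun z => u z • a) z) * (fderiv ℂ (expScale fun z => u z • a) z).det - J z =
        diagDeriv a K z := by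
  let T : (ι → ℂ) → ι → ℂ := expScale fun z => u z • a
  let A : (ι → ℂ) → ℂ := circleMean a J
  obtain ⟨B, hB, hJB⟩ := exists_eventuallyEq_circleMean_add_diagDeriv ha hJ
  have hA : AnalyticAt ℂ A 0 := analyticAt_circleMean ha hJ
  have hDA := diagDeriv_circleMean_self ha hJ
  have hT : AnalyticAt ℂ T 0 := analyticAt_expScale (hu.smul analyticAt_const)
  have hT0 : Tendsto T (𝓝 0) (𝓝 0) := by
    simpa only [T, expScale_zero] using hT.continuousAt.tendsto
  have hBT : AnalyticAt ℂ (fun z => B (T z)) 0 := hB.fun_comp_of_eq hT (expScale_zero _)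
  refine ⟨fun z => A z * u z + (B (T z) - B z), (hA.mul hu).add (hBT.sub hB), ?_⟩
  filter_upwards [hJB, hT0.eventually hJB, hDA, eventually_apply_diagExp_smul_eq hA hDA
    hu.continuousAt, hA.eventually_analyticAt, hu.eventually_analyticAt, hB.eventually_analyticAt,
    hT0.eventually hB.eventually_analyticAt, hBT.eventually_analyticAt]
    with z hJz hJTz hDAz hAexp hAz huz hBz hBTz hBTz'
  have hATz : circleMean a J (T z) = circleMean a J z := hAexp
  rw [diagDeriv_add (hAz.fun_mul huz).differentiableAt (hBTz'.fun_sub hBz).differentiableAt,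
    diagDeriv_mul hAz.differentiableAt huz.differentiableAt,
    diagDeriv_sub hBTz'.differentiableAt hBz.differentiableAt,
    diagDeriv_comp_expScale_smul hBTz.differentiableAt huz.differentiableAt,
    det_fderiv_expScale_smul a huz.differentiableAt, ha0, mul_zero, Complex.exp_zero, hJTz, hJz,
    hATz, hDAz, Pi.zero_apply]
  ring

theorem isFlowExact_det_comp_expScale_sub {k : κ} {φ : (ι → ℂ) → ι → ℂ}
    {u : (ι → ℂ) → ℂ} (hk : k ∈ S) (hc : ∀ i, ∃ m : ℤ, c k i = m) (hc0 : ∑ i, c k i = 0)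
    (hφ : AnalyticAt ℂ φ 0) (hu : AnalyticAt ℂ u 0) :
    IsFlowExact c S fun z => (fderiv ℂ (fun z => φ (expScale (fun z => u z • c k) z)) z).det -
      (fderiv ℂ φ z).det := by
  obtain ⟨K, hK, hdet⟩ :=
    exists_comp_expScale_mul_det_sub_eq_diagDeriv hc hc0 (analyticAt_det_fderiv hφ) hu
  have hT : AnalyticAt ℂ (expScale fun z => u z • c k) 0 :=
    analyticAt_expScale (hu.smul analyticAt_const)
  have hT0 : Tendsto (expScale fun z => u z • c k) (𝓝 0) (𝓝 0) := by
    simpa only [expScale_zero] using hT.continuousAt.tendsto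
  refine (isFlowExact_diagDeriv hk hK).congr ?_
  filter_upwards [hdet, hT.eventually_analyticAt, hT0.eventually hφ.eventually_analyticAt]
    with z hz hTz hφz
  rw [← hz, det_fderiv_comp hφz.differentiableAt hTz.differentiableAt]

end FlowExactness

section Uniqueness

theorem eventually_of_eventually_prod_coord {ι : Type*} [Fintype ι] [Nonempty ι] {p : ℂ → Prop}
    (h : ∀ᶠ z : ι → ℂ in 𝓝 0, p (∏ i, z i)) : ∀ᶠ t in 𝓝 0, p t := by
  obtain ⟨r, hr, hball⟩ := Metric.eventually_nhds_iff_ball.1 h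
  refine Metric.eventually_nhds_iff_ball.2 ⟨r ^ Fintype.card ι, by positivity, fun t ht => ?_⟩
  obtain ⟨s, rfl⟩ := IsAlgClosed.exists_pow_nat_eq t (Fintype.card_pos (α := ι))
  rw [mem_ball_zero_iff, norm_pow] at ht
  have hs : (fun _ : ι => s) ∈ Metric.ball 0 r := by
    rw [mem_ball_zero_iff, pi_norm_const]
    exact lt_of_pow_lt_pow_left₀ _ hr.le ht
  simpa using hball _ hs

theorem eventually_eq_mul_of_deriv_eq {ψ : ℂ → ℂ} {a : ℂ} (hψ : AnalyticAt ℂ ψ 0) (hψ0 : ψ 0 = 0)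
    (h : ∀ᶠ t in 𝓝 0, deriv ψ t = a) : ∀ᶠ t in 𝓝 0, ψ t = a * t := by
  obtain ⟨r, hr, hball⟩ := Metric.eventually_nhds_iff_ball.1 (h.and hψ.eventually_analyticAt)
  have heqOn : Set.EqOn ψ (fun t => a * t) (Metric.ball 0 r) := by
    refine Metric.isOpen_ball.eqOn_of_deriv_eq (Metric.isConnected_ball hr).isPreconnected
      (fun t ht => (hball t ht).2.differentiableAt.differentiableWithinAt)
      (differentiable_id.const_mul a).differentiableOn (fun t ht => ?_)
      (Metric.mem_ball_self hr) (by simp [hψ0])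
    simp [(hball t ht).1]
  exact heqOn.eventuallyEq_of_mem (Metric.ball_mem_nhds 0 hr)

theorem det_fderiv_eq_sign_mul {ι : Type*} [Fintype ι] [DecidableEq ι] {φ χ : (ι → ℂ) → ι → ℂ}
    {z : ι → ℂ} (τ : Equiv.Perm ι) (hχ : DifferentiableAt ℂ χ z)
    (h : ∀ᶠ y in 𝓝 z, ∀ j, χ y (τ j) = φ y j) :
    (fderiv ℂ φ z).det = Equiv.Perm.sign τ * (fderiv ℂ χ z).det := by
  have hφ : HasFDerivAt φ (.pi fun j => .proj (τ j) ∘L fderiv ℂ χ z) z :=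
    hasFDerivAt_pi.2 fun j => (hasFDerivAt_pi'.1 hχ.hasFDerivAt (τ j)).congr_of_eventuallyEq <|
      h.mono fun y hy => (hy j).symm
  have hperm := Matrix.det_permute τ (LinearMap.toMatrix' (fderiv ℂ χ z).toLinearMap)
  rw [LinearMap.det_toMatrix'] at hperm
  rw [hφ.fderiv, ContinuousLinearMap.det, ContinuousLinearMap.det, ← hperm,
    ← LinearMap.det_toMatrix']
  rfl

variable {n : ℕ}

theorem eventually_det_fderiv_expScale_of_forall_ne {o : Fin n} {ψ : ℂ → ℂ}
    {v : (Fin n → ℂ) → Fin n → ℂ} (hψ : AnalyticAt ℂ ψ 0) (hv : AnalyticAt ℂ v 0)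
    (hprod : ∀ᶠ z in 𝓝 0, ∏ i, expScale v z i = ψ (∏ i, z i))
    (hsupp : ∀ j ≠ o, ∀ᶠ z in 𝓝 0, v z j = 0) :
    ∀ᶠ z in 𝓝 0, (fderiv ℂ (expScale v) z).det = deriv ψ (∏ i, z i) := by
  have hsingle : expScale v =ᶠ[𝓝 0] expScale fun z => v z o • Pi.single o 1 := by
    filter_upwards [eventually_all.2 fun j => eventually_imp_distrib_left.2 (hsupp j)] with z hz
    have hvz : v z = v z o • Pi.single o 1 := by
      ext j
      rcases eq_or_ne j o with rfl | hj
      · simp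
      · simp [hz j hj, hj]
    rw [expScale, hvz, expScale]
  filter_upwards [hsingle.eventually_nhds, eventually_det_fderiv_expScale_single o
    (analyticAt_pi_iff.1 hv o) hψ (hprod.congr (hsingle.mono fun z hz => by rw [hz]))]
    with z hz hdet
  rw [EventuallyEq.fderiv_eq hz, hdet]

/-- Factoring out the map with exponents `v k` at `k` and `-v k` at `o` transfers the exponent from
`k` to `o`. -/
theorem exists_expScale_comp_coordExchange_eq (o k : Fin n) {v : (Fin n → ℂ) → Fin n → ℂ}
    (hv : AnalyticAt ℂ v 0) :
    ∃ v' : (Fin n → ℂ) → Fin n → ℂ, AnalyticAt ℂ v' 0 ∧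
      (∀ᶠ z in 𝓝 0, expScale v' (expScale (fun z => v z k • coordExchange o k) z) =
        expScale v z) ∧
      (∀ ψ : ℂ → ℂ, (∀ᶠ z in 𝓝 0, ∏ i, expScale v z i = ψ (∏ i, z i)) →
        ∀ᶠ z in 𝓝 0, ∏ i, expScale v' z i = ψ (∏ i, z i)) ∧
      ∀ j ≠ o, (j ≠ k → ∀ᶠ z in 𝓝 0, v z j = 0) → ∀ᶠ z in 𝓝 0, v' z j = 0 := by
  have huc : AnalyticAt ℂ (fun z => v z k • coordExchange o k) 0 :=
    (analyticAt_pi_iff.1 hv k).smul analyticAt_const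
  obtain ⟨χ, hχ⟩ := exists_isGermBiholo (analyticAt_expScale huc) (expScale_zero _)
    (det_fderiv_expScale_zero_ne_zero huc.differentiableAt)
  let v' : (Fin n → ℂ) → Fin n → ℂ := fun w => v (χ w) - v (χ w) k • coordExchange o k
  have hfactor : ∀ᶠ z in 𝓝 0,
      expScale v' (expScale (fun z => v z k • coordExchange o k) z) = expScale v z := by
    filter_upwards [hχ.eventually_left_inverse] with z hz
    ext j
    simp only [v', expScale.eq_def v', hz]
    rw [expScale, expScale, diagExp_apply, diagExp_apply, diagExp_apply, ← mul_assoc,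
      ← Complex.exp_add, Pi.sub_apply, sub_add_cancel]
  refine ⟨v', (hv.sub huc).fun_comp_of_eq hχ.symm.analyticAt hχ.symm.map_zero, hfactor,
    fun ψ hprod => ?_, fun j hjo hj => ?_⟩
  · filter_upwards [hχ.symm.tendsto.eventually hfactor, hχ.symm.tendsto.eventually hprod,
      hχ.symm.eventually_left_inverse] with w hw hprodw hid
    have hprodχ : ∏ i, w i = ∏ i, χ w i := by
      conv_lhs => rw [← hid]
      rw [prod_expScale_smul, sum_coordExchange, mul_zero, Complex.exp_zero, one_mul]
    rw [hid] at hw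
    rw [hw, hprodw, hprodχ]
  · rcases eq_or_ne j k with rfl | hjk
    · exact Eventually.of_forall fun w => by simp [v', coordExchange, hjo]
    · filter_upwards [hχ.symm.tendsto.eventually (hj hjk)] with w hw
      simp [v', coordExchange, hjo, hjk, hw]

/-- The induction is on a set `S` of coordinates which, together with `o`, carries all nonzero
exponents. -/
theorem isFlowExact_det_expScale_sub (o : Fin n) (S : Finset (Fin n)) {ψ : ℂ → ℂ}
    (hψ : AnalyticAt ℂ ψ 0) {v : (Fin n → ℂ) → Fin n → ℂ} (hv : AnalyticAt ℂ v 0)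
    (hprod : ∀ᶠ z in 𝓝 0, ∏ i, expScale v z i = ψ (∏ i, z i))
    (hsupp : ∀ j ∉ S, j ≠ o → ∀ᶠ z in 𝓝 0, v z j = 0) :
    IsFlowExact (coordExchange o) S fun z =>
      (fderiv ℂ (expScale v) z).det - deriv ψ (∏ i, z i) := by
  induction S using Finset.induction_on generalizing v with
  | empty =>
    refine isFlowExact_zero.congr ?_
    filter_upwards [eventually_det_fderiv_expScale_of_forall_ne hψ hv hprod
      fun j => hsupp j (Finset.notMem_empty j)] with z hz
    rw [hz, sub_self, Pi.zero_apply]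
  | insert k S _ ih =>
    obtain ⟨v', hv', hfactor, hprod', hsupp'⟩ := exists_expScale_comp_coordExchange_eq o k hv
    have hexact := (ih hv' (hprod' ψ hprod) fun j hj hjo => hsupp' j hjo fun hjk =>
      hsupp j (by simp [hj, hjk]) hjo).mono (Finset.subset_insert k S)
    refine (hexact.add (isFlowExact_det_comp_expScale_sub (Finset.mem_insert_self k S)
      (coordExchange_integral o k) (sum_coordExchange o k) (analyticAt_expScale hv')
      (analyticAt_pi_iff.1 hv k))).congr ?_
    filter_upwards [hfactor.eventually_nhds] with z hz
    rw [EventuallyEq.fderiv_eq hz]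
    ring

theorem eventually_eq_or_eq_neg_of_isVolumePreserving [NeZero n] {χ : (Fin n → ℂ) → Fin n → ℂ}
    {ψ : ℂ → ℂ} (hχ : AnalyticAt ℂ χ 0) (hvol : IsVolumePreserving χ) (hψ : AnalyticAt ℂ ψ 0)
    (hψ0 : ψ 0 = 0) (hprod : ∀ᶠ z in 𝓝 0, ∏ i, χ z i = ψ (∏ i, z i)) :
    (∀ᶠ t in 𝓝 0, ψ t = t) ∨ ∀ᶠ t in 𝓝 0, ψ t = -t := by
  have hvanish : ∀ j, ∀ᶠ z in 𝓝 0, ∏ i, χ (Function.update z j 0) i = 0 := fun j => by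
    have htendsto : Tendsto (fun z : Fin n → ℂ => Function.update z j 0) (𝓝 0) (𝓝 0) := by
      have hcont : Continuous fun z : Fin n → ℂ => Function.update z j 0 :=
        continuous_id.update j continuous_const
      simpa using hcont.tendsto 0
    filter_upwards [htendsto.eventually hprod] with z hz
    rw [hz, Finset.prod_eq_zero (Finset.mem_univ j) (Function.update_self j 0 z), hψ0]
  obtain ⟨τ, v, hv, hτ⟩ := exists_perm_eventually_eq_expScale hχ
    (hvol.self_of_nhds.trans_ne one_ne_zero) hvanish
  have hprodv : ∀ᶠ z in 𝓝 0, ∏ i, expScale v z i = ψ (∏ i, z i) := by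
    filter_upwards [hprod, hτ] with z hz hτz
    rw [← hz, ← Equiv.prod_comp τ (χ z)]
    exact Finset.prod_congr rfl fun j _ => (hτz j).symm
  have hdet : ∀ᶠ z in 𝓝 0, (fderiv ℂ (expScale v) z).det = Equiv.Perm.sign τ := by
    filter_upwards [hvol, hχ.eventually_analyticAt, hτ.eventually_nhds] with z hz hχz hτz
    rw [det_fderiv_eq_sign_mul τ hχz.differentiableAt hτz, ContinuousLinearMap.det, hz, mul_one]
  have hzero := eventually_comp_prod_coord_eq_zero_of_isFlowExact
    (h := fun t => Equiv.Perm.sign τ - deriv ψ t) (coordExchange_integral 0) (sum_coordExchange 0)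
    ((isFlowExact_det_expScale_sub 0 Finset.univ hψ hv hprodv (by simp)).congr
      (hdet.mono fun z hz => by simp only [hz]))
  have hlinear := eventually_eq_mul_of_deriv_eq hψ hψ0
    ((eventually_of_eventually_prod_coord hzero).mono fun t ht => (sub_eq_zero.1 ht).symm)
  rcases Int.units_eq_one_or (Equiv.Perm.sign τ) with hsign | hsign
  · exact .inl (by simpa [hsign] using hlinear)
  · exact .inr (by simpa [hsign] using hlinear)

theorem eventually_eq_or_eq_comp_neg_of_isVolumePreserving [NeZero n] {f : (Fin n → ℂ) → ℂ}
    {Φ Φι Φ' Φι' : (Fin n → ℂ) → Fin n → ℂ} {Ψ Ψ' : ℂ → ℂ}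
    (hΦ : IsGermBiholo Φ Φι) (hvol : IsVolumePreserving Φ) (hΨ : IsGermAuto Ψ)
    (hf : ∀ᶠ z in 𝓝 0, f (Φ z) = Ψ (∏ i, z i))
    (hΦ' : IsGermBiholo Φ' Φι') (hvol' : IsVolumePreserving Φ') (hΨ' : IsGermAuto Ψ')
    (hf' : ∀ᶠ z in 𝓝 0, f (Φ' z) = Ψ' (∏ i, z i)) :
    (∀ᶠ t in 𝓝 0, Ψ' t = Ψ t) ∨ ∀ᶠ t in 𝓝 0, Ψ' t = Ψ (-t) := by
  obtain ⟨Λ, hΛ, hleft, hright⟩ := hΨ.exists_inverse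
  have hχ := hΦ.symm.comp hΦ'
  have hprod : ∀ᶠ z in 𝓝 0, ∏ i, Φι (Φ' z) i = Λ (Ψ' (∏ i, z i)) := by
    filter_upwards [hf', hΦ'.tendsto.eventually hΦ.symm.eventually_left_inverse,
      hχ.tendsto.eventually hf, (tendsto_prod_coord.comp hχ.tendsto).eventually hleft]
      with z hfz' hid hfz hleftz
    rw [← hfz', ← hid, hfz, hid]
    exact hleftz.symm
  have hΨΛ := hΨ'.tendsto.eventually hright
  rcases eventually_eq_or_eq_neg_of_isVolumePreserving hχ.analyticAt
    ((hΦ.isVolumePreserving_symm hvol).comp hvol' hΦ.symm.analyticAt hΦ'.analyticAt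
      hΦ'.tendsto)
    (hΛ.1.fun_comp_of_eq hΨ'.1 hΨ'.2.1) (by rw [hΨ'.2.1, hΛ.2.1]) hprod with hpos | hneg
  · exact .inl <| by filter_upwards [hpos, hΨΛ] with t ht hΨt using by rw [← hΨt, ht]
  · exact .inr <| by filter_upwards [hneg, hΨΛ] with t ht hΨt using by rw [← hΨt, ht]

end Uniqueness

/-- **Theorem (Szawlowski).** If `f` is right equivalent to the product of all
coordinates, then `f ∘ Φ = Ψ(z₁⋯zₙ)` for a volume-preserving biholomorphism `Φ` and an
automorphism `Ψ` of `(ℂ,0)`, and `Ψ` is uniquely determined by `f` up to a sign. -/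
theorem stmt_15 (n : ℕ) (hn : 2 ≤ n) (f : (Fin n → ℂ) → ℂ)
    (hf : AnalyticAt ℂ f 0)
    -- `f` is right equivalent to the product of all coordinates
    (hre : ∃ σ σι : (Fin n → ℂ) → (Fin n → ℂ), IsGermBiholo σ σι ∧
      ∀ᶠ z in 𝓝 (0 : Fin n → ℂ), f (σι z) = ∏ i, z i) :
    ∃ Φ Φι : (Fin n → ℂ) → (Fin n → ℂ), IsGermBiholo Φ Φι ∧ IsVolumePreserving Φ ∧
    ∃ Ψ : ℂ → ℂ, IsGermAuto Ψ ∧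
      -- `f ∘ Φ = Ψ(z₁ ⋯ zₙ)`
      (∀ᶠ z in 𝓝 (0 : Fin n → ℂ), f (Φ z) = Ψ (∏ i, z i)) ∧
      -- `Ψ` is uniquely determined by `f` up to a sign
      (∀ Φ' Φι' : (Fin n → ℂ) → (Fin n → ℂ), ∀ Ψ' : ℂ → ℂ,
        IsGermBiholo Φ' Φι' → IsVolumePreserving Φ' → IsGermAuto Ψ' →
        (∀ᶠ z in 𝓝 (0 : Fin n → ℂ), f (Φ' z) = Ψ' (∏ i, z i)) →
        (∀ᶠ t in 𝓝 (0 : ℂ), Ψ' t = Ψ t) ∨ (∀ᶠ t in 𝓝 (0 : ℂ), Ψ' t = Ψ (-t))) := by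
  have : NeZero n := ⟨by omega⟩
  obtain ⟨σ, σι, hσ, hfσ⟩ := hre
  obtain ⟨Φ, Φι, hΦ, hvol, Ψ, hΨ, hfΦ⟩ := exists_isVolumePreserving_comp_eq hσ hfσ
  exact ⟨Φ, Φι, hΦ, hvol, Ψ, hΨ, hfΦ, fun Φ' Φι' Ψ' hΦ' hvol' hΨ' hfΦ' =>
    eventually_eq_or_eq_comp_neg_of_isVolumePreserving hΦ hvol hΨ hfΦ hΦ' hvol' hΨ' hfΦ'⟩
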